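/- arXiv:1709.04799 — 4 statements merged into one kernel-verified Lean document; each statement's English description precedes it below -/
import Mathlib

section
/- Let g : ℕ₀ → ℕ be monotonically increasing with g(0) = 1 and suppose g(i)/g(i−1) = 1 + O(i^{−1/2−ε}) for some ε > 0. Then there is a constant C (depending only on g and ε) such that for all positive integers ν and all positive integers ν₁ ≥ ν₂ ≥ … ≥ ν_t with ν_t ≥ ν, one has ∑_{j ≤ t} log g(ν_j) ≤ C·( ν^{−2ε} + (log g(ν))²/ν )^{1/2} · (∑_{j ≤ t} j·ν_j)^{1/2}. -/
lemma aux_card (A : Finset ℕ) : (∀ x ∈ A, 1 ≤ x) → A.card ^ 2 ≤ 2 * ∑ x ∈ A, x := by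
  induction A using Finset.induction_on_max with
  | empty => simp
  | insert x s hx ih =>
    intro h
    have hn : x ∉ s := fun hh => lt_irrefl _ (hx x hh)
    have h1 := ih (fun y hy => h y (Finset.mem_insert_of_mem hy))
    rw [Finset.card_insert_of_notMem hn, Finset.sum_insert hn]
    have hc : s.card ≤ x - 1 := by
      have : s ⊆ Finset.Ico 1 x := fun y hy =>
        Finset.mem_Ico.2 ⟨h y (Finset.mem_insert_of_mem hy), hx y hy⟩
      simpa using Finset.card_le_card this
    have := h x (Finset.mem_insert_self _ _)
    have h2 : s.card + 1 ≤ x := by omega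
    nlinarith

lemma aux_card_real (A : Finset ℕ) (h : ∀ x ∈ A, 1 ≤ x) :
    (A.card : ℝ) ^ 2 ≤ 2 * ∑ x ∈ A, (x : ℝ) := by
  have h1 : ((A.card ^ 2 : ℕ) : ℝ) ≤ ((2 * ∑ x ∈ A, x : ℕ) : ℝ) := Nat.cast_le.2 (aux_card A h)
  push_cast at h1
  exact h1

lemma aux_tel (p : ℝ) (hp : 0 < p) (n : ℕ) (hn : 1 ≤ n) :
    p * ((n + 1 : ℕ) : ℝ) ^ (-1 - p) ≤ (n : ℝ) ^ (-p) - ((n + 1 : ℕ) : ℝ) ^ (-p) := by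
  have hn0 : (0 : ℝ) < n := by exact_mod_cast hn
  have hm : (0 : ℝ) < ((n + 1 : ℕ) : ℝ) := by positivity
  set m : ℝ := ((n + 1 : ℕ) : ℝ) with hmdef
  have hmn : m = n + 1 := by simp [hmdef]
  have h1 : m ^ (-1 - p) = m ^ (-p) * m⁻¹ := by
    rw [show -1 - p = -p + -1 by ring, Real.rpow_add hm, Real.rpow_neg_one]
  have h2 : (n : ℝ) ^ (-p) = m ^ (-p) * (n / m) ^ (-p) := by
    rw [← Real.mul_rpow hm.le (by positivity)]
    congr 1
    field_simp
  have h3 : 1 + p * m⁻¹ ≤ (n / m) ^ (-p) := by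
    rw [Real.rpow_def_of_pos (by positivity)]
    have := Real.add_one_le_exp (Real.log (n / m) * -p)
    have hl := Real.log_le_sub_one_of_pos (show 0 < n / m by positivity)
    have e : n / m - 1 = - m⁻¹ := by
      field_simp
      rw [hmn]; ring
    rw [e] at hl
    nlinarith
  have hpos : 0 < m ^ (-p) := by positivity
  rw [h1, h2]
  nlinarith

lemma aux_sum (p : ℝ) (hp : 0 < p) (ν : ℕ) (hν : 1 ≤ ν) (N : ℕ) (hN : ν ≤ N) :
    p * ∑ i ∈ Finset.Ioc ν N, (i : ℝ) ^ (-1 - p) ≤ (ν : ℝ) ^ (-p) - (N : ℝ) ^ (-p) := by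
  induction N, hN using Nat.le_induction with
  | base => simp
  | succ n hn ih =>
    rw [Finset.sum_Ioc_succ_top (by omega), mul_add]
    have := aux_tel p hp n (by omega)
    linarith

lemma aux_log (g : ℕ → ℕ) (hg : ∀ n, 1 ≤ g n) (B ε : ℝ)
    (h : ∀ i : ℕ, 1 ≤ i →
      |(g i : ℝ) / (g (i - 1) : ℝ) - 1| ≤ B * (i : ℝ) ^ (-(1 / 2 : ℝ) - ε))
    (ν k : ℕ) (hk : ν ≤ k) :
    Real.log (g k) ≤ Real.log (g ν) +
      ∑ i ∈ Finset.Ioc ν k, B * (i : ℝ) ^ (-(1 / 2 : ℝ) - ε) := by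
  induction k, hk using Nat.le_induction with
  | base => simp
  | succ n hn ih =>
    rw [Finset.sum_Ioc_succ_top (by omega)]
    have h1 := (abs_le.1 (h (n + 1) (by omega))).2
    simp only [Nat.add_sub_cancel] at h1
    have p0 : (0 : ℝ) < g n := by exact_mod_cast hg n
    have p1 : (0 : ℝ) < g (n + 1) := by exact_mod_cast hg (n + 1)
    have h2 := Real.log_le_sub_one_of_pos (div_pos p1 p0)
    rw [Real.log_div p1.ne' p0.ne'] at h2
    linarith

lemma le_of_sq_le_sq_aux {x y : ℝ} (h : x ^ 2 ≤ y ^ 2) (hy : 0 ≤ y) : x ≤ y :=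
  le_of_abs_le (abs_le_of_sq_le_sq h hy)

/-- If `g : ℕ₀ → ℕ` is monotonically increasing with `g(0) = 1` and
`g(i)/g(i−1) = 1 + O(i^{−1/2−ε})` for some `ε > 0`, then there is a constant `C`
such that for all `ν ≥ 1` and all positive integers `ν₁ ≥ ν₂ ≥ … ≥ ν_t` with `ν_t ≥ ν`,
`∑_{j ≤ t} log g(ν_j) ≤ C·(ν^{−2ε} + (log g(ν))²/ν)^{1/2}·(∑_{j ≤ t} j·ν_j)^{1/2}`. -/
theorem sum_log_g_le_of_large_min_exponent
    (g : ℕ → ℕ) (hg0 : g 0 = 1) (hgmono : Monotone g) (ε : ℝ) (hε : 0 < ε)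
    (hgratio : ∃ B : ℝ, ∀ i : ℕ, 1 ≤ i →
      |(g i : ℝ) / (g (i - 1) : ℝ) - 1| ≤ B * (i : ℝ) ^ (-(1 / 2 : ℝ) - ε)) :
    ∃ C : ℝ, 0 < C ∧ ∀ ν : ℕ, 1 ≤ ν → ∀ t : ℕ, 1 ≤ t → ∀ a : ℕ → ℕ,
      (∀ j : ℕ, 1 ≤ j → j ≤ t → 1 ≤ a j) →
      (∀ i j : ℕ, 1 ≤ i → i ≤ j → j ≤ t → a j ≤ a i) →
      ν ≤ a t →
      ∑ j ∈ Finset.Icc 1 t, Real.log (g (a j)) ≤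
        C * Real.sqrt ((ν : ℝ) ^ (-(2 * ε)) + (Real.log (g ν)) ^ 2 / ν) *
          Real.sqrt (∑ j ∈ Finset.Icc 1 t, (j : ℝ) * a j) := by
  obtain ⟨B, hB⟩ := hgratio
  have hg : ∀ n, 1 ≤ g n := fun n => hg0 ▸ hgmono (Nat.zero_le n)
  have hB0 : 0 ≤ B := by
    have := (abs_nonneg _).trans (hB 1 le_rfl)
    simpa using this
  refine ⟨2 + B * Real.sqrt (1 / ε), by positivity, ?_⟩
  intro ν hν t ht a _ hmono hat
  set X : ℝ := (ν : ℝ) ^ (-(2 * ε)) + (Real.log (g ν)) ^ 2 / ν with hX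
  set S : ℝ := ∑ j ∈ Finset.Icc 1 t, (j : ℝ) * a j with hS
  have hν0 : (0 : ℝ) < ν := by exact_mod_cast hν
  have hX0 : 0 ≤ X := by positivity
  have hS0 : 0 ≤ S := by positivity
  set w : ℕ → ℝ := fun i => (i : ℝ) ^ (-(1 / 2 : ℝ) - ε) with hw
  set N := a 1 with hN
  set m : ℕ → ℝ := fun i => (((Finset.Icc 1 t).filter (fun j => i ≤ a j)).card : ℝ) with hm
  have hge : ∀ j ∈ Finset.Icc 1 t, ν ≤ a j := fun j hj => by
    rw [Finset.mem_Icc] at hj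
    exact hat.trans (hmono j t hj.1 hj.2 le_rfl)
  have hle : ∀ j ∈ Finset.Icc 1 t, a j ≤ N := fun j hj => by
    rw [Finset.mem_Icc] at hj
    exact hmono 1 j le_rfl hj.1 hj.2
  have hνN : ν ≤ N := (hge 1 (by simp [ht])).trans le_rfl
  -- first bound
  have h1 : ∑ j ∈ Finset.Icc 1 t, Real.log (g (a j)) ≤
      t * Real.log (g ν) + B * ∑ i ∈ Finset.Ioc ν N, m i * w i := by
    have e : ∑ i ∈ Finset.Ioc ν N, m i * w i =
        ∑ j ∈ Finset.Icc 1 t, ∑ i ∈ Finset.Ioc ν (a j), w i := by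
      have : ∀ j ∈ Finset.Icc 1 t, ∑ i ∈ Finset.Ioc ν (a j), w i =
          ∑ i ∈ Finset.Ioc ν N, if i ≤ a j then w i else 0 := by
        intro j hj
        rw [← Finset.sum_filter]
        congr 1
        ext i
        have := hle j hj
        simp only [Finset.mem_Ioc, Finset.mem_filter]
        omega
      rw [Finset.sum_congr rfl this, Finset.sum_comm]
      refine Finset.sum_congr rfl fun i _ => ?_
      rw [← Finset.sum_filter, Finset.sum_const, nsmul_eq_mul]
    rw [e, Finset.mul_sum]
    calc _ ≤ ∑ j ∈ Finset.Icc 1 t, (Real.log (g ν) + B * ∑ i ∈ Finset.Ioc ν (a j), w i) := by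
          refine Finset.sum_le_sum fun j hj => ?_
          rw [Finset.mul_sum]
          exact aux_log g hg B ε hB ν (a j) (hge j hj)
      _ = _ := by
          rw [Finset.sum_add_distrib]
          simp
  have h2 : (t : ℝ) ^ 2 * ν ≤ 2 * S := by
    have := aux_card_real (Finset.Icc 1 t) (fun x hx => (Finset.mem_Icc.1 hx).1)
    simp only [Nat.card_Icc, Nat.add_sub_cancel] at this
    have h3 : (∑ x ∈ Finset.Icc 1 t, (x : ℝ)) * ν ≤ S := by
      rw [Finset.sum_mul]
      refine Finset.sum_le_sum fun j hj => ?_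
      have : (ν : ℝ) ≤ a j := by exact_mod_cast hge j hj
      gcongr
    nlinarith
  have h3 : ∑ i ∈ Finset.Ioc ν N, m i ^ 2 ≤ 2 * S := by
    calc _ ≤ ∑ i ∈ Finset.Ioc ν N, 2 * ∑ j ∈ (Finset.Icc 1 t).filter (fun j => i ≤ a j), (j : ℝ) := by
          refine Finset.sum_le_sum fun i _ => aux_card_real _ fun x hx => ?_
          exact (Finset.mem_Icc.1 (Finset.mem_filter.1 hx).1).1
      _ ≤ 2 * S := by
          rw [← Finset.mul_sum]
          refine mul_le_mul_of_nonneg_left ?_ (by norm_num)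
          simp_rw [Finset.sum_filter]
          rw [Finset.sum_comm]
          refine Finset.sum_le_sum fun j hj => ?_
          rw [← Finset.sum_filter, Finset.sum_const, nsmul_eq_mul, mul_comm]
          refine mul_le_mul_of_nonneg_left ?_ (by positivity)
          have : (Finset.Ioc ν N).filter (fun i => i ≤ a j) ⊆ Finset.Ioc 0 (a j) := by
            intro i
            simp only [Finset.mem_Ioc, Finset.mem_filter]
            omega
          have := Finset.card_le_card this
          simp only [Nat.card_Ioc, Nat.sub_zero] at this
          exact_mod_cast this
  have h4 : ∑ i ∈ Finset.Ioc ν N, w i ^ 2 ≤ X / (2 * ε) := by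
    rw [le_div_iff₀ (by positivity), mul_comm]
    have h5 := aux_sum (2 * ε) (by positivity) ν hν N hνN
    have e : ∀ i ∈ Finset.Ioc ν N, w i ^ 2 = (i : ℝ) ^ (-1 - 2 * ε) := by
      intro i _
      rw [hw]
      dsimp only
      rw [← Real.rpow_natCast, ← Real.rpow_mul (by positivity)]
      congr 1
      push_cast
      ring
    rw [Finset.sum_congr rfl e]
    have : 0 ≤ (N : ℝ) ^ (-(2 * ε)) := by positivity
    have : 0 ≤ (Real.log (g ν)) ^ 2 / ν := by positivity
    linarith
  have h5 : (t : ℝ) * Real.log (g ν) ≤ 2 * Real.sqrt X * Real.sqrt S := by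
    refine le_of_sq_le_sq_aux ?_ (by positivity)
    rw [mul_pow, mul_pow, mul_pow, Real.sq_sqrt hX0, Real.sq_sqrt hS0]
    have h6 : (Real.log (g ν)) ^ 2 / ν ≤ X := by
      have : 0 ≤ (ν : ℝ) ^ (-(2 * ε)) := by positivity
      linarith
    calc (t : ℝ) ^ 2 * Real.log (g ν) ^ 2 = (t ^ 2 * ν) * (Real.log (g ν) ^ 2 / ν) := by
          field_simp
      _ ≤ (2 * S) * X := by gcongr
      _ ≤ _ := by nlinarith [mul_nonneg hX0 hS0]
  have h6 : ∑ i ∈ Finset.Ioc ν N, m i * w i ≤ Real.sqrt (1 / ε) * Real.sqrt X * Real.sqrt S := by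
    refine le_of_sq_le_sq_aux ?_ (by positivity)
    rw [mul_pow, mul_pow, Real.sq_sqrt hX0, Real.sq_sqrt hS0, Real.sq_sqrt (by positivity)]
    calc _ ≤ (∑ i ∈ Finset.Ioc ν N, m i ^ 2) * ∑ i ∈ Finset.Ioc ν N, w i ^ 2 :=
          Finset.sum_mul_sq_le_sq_mul_sq _ _ _
      _ ≤ (2 * S) * (X / (2 * ε)) := by gcongr
      _ = _ := by field_simp
  have h7 := mul_le_mul_of_nonneg_left h6 hB0
  calc _ ≤ _ := h1
    _ ≤ _ := add_le_add h5 h7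
    _ = _ := by ring
end

section
/- Under the standing hypotheses, for every ε̃ > 0 there is a constant C (depending on f, Q and ε̃) such that for every positive integer n with s := ω_Q(n) ≥ 2 one has f(n) ≤ C·( (c_f + ε̃)·log n / (s·log s) )^s. -/
theorem aux_amgm (S : Finset ℕ) (z : ℕ → ℝ) (hz : ∀ i ∈ S, 0 ≤ z i) (hS : 0 < S.card) :
    ∏ i ∈ S, z i ≤ ((∑ i ∈ S, z i) / S.card) ^ S.card := by
  have h := Real.geom_mean_le_arith_mean S (fun _ => 1) z (fun _ _ => zero_le_one)
    (by simpa using hS) hz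
  simp only [Real.rpow_one, Finset.sum_const, nsmul_eq_mul, mul_one, one_mul] at h
  have h0 : 0 ≤ ∏ i ∈ S, z i := Finset.prod_nonneg hz
  calc ∏ i ∈ S, z i = ((∏ i ∈ S, z i) ^ ((S.card : ℝ)⁻¹)) ^ S.card := by
        rw [Real.rpow_inv_natCast_pow h0 hS.ne']
    _ ≤ _ := by gcongr

theorem aux_eventually (θ K : ℝ) (hθ : θ < 1) (hK : 1 < K) :
    ∀ᶠ s : ℕ in Filter.atTop,
      (Real.log s / Real.log 2) ^ ((s : ℝ) ^ θ) ≤ K ^ s := by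
  have h1 : (fun x : ℝ => Real.log x) =o[Filter.atTop] fun x => x ^ (1 - θ) :=
    isLittleO_log_rpow_atTop (by linarith)
  have hl2 : 0 < Real.log 2 := Real.log_pos (by norm_num)
  have hK0 := Real.log_pos hK
  have h2 := h1.def (c := Real.log 2 * Real.log K) (by positivity)
  have h3 := tendsto_natCast_atTop_atTop (R := ℝ) |>.eventually h2
  filter_upwards [h3, Filter.eventually_ge_atTop 2] with s hs hs2
  have hs2' : (2 : ℝ) ≤ s := by exact_mod_cast hs2
  have hs0 : (0 : ℝ) < s := by linarith
  have hls : 0 < Real.log s := Real.log_pos (by linarith)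
  rw [Real.norm_of_nonneg hls.le, Real.norm_of_nonneg (by positivity)] at hs
  have hr : 0 < Real.log s / Real.log 2 := by positivity
  rw [← Real.rpow_natCast, Real.rpow_def_of_pos hr, Real.rpow_def_of_pos (by linarith : 0 < K)]
  apply Real.exp_le_exp.mpr
  have hle : Real.log (Real.log s / Real.log 2) ≤ Real.log K * (s : ℝ) ^ (1 - θ) := by
    have := Real.log_le_sub_one_of_pos hr
    have h4 : Real.log s / Real.log 2 ≤ Real.log K * (s : ℝ) ^ (1 - θ) := by
      rw [div_le_iff₀ hl2]; linarith
    linarith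
  calc _ ≤ (Real.log K * (s : ℝ) ^ (1 - θ)) * (s : ℝ) ^ θ := by gcongr
    _ = _ := by
      rw [mul_assoc, ← Real.rpow_add hs0]; simp

theorem aux_bound (θ K : ℝ) (hθ : θ < 1) (hK : 1 < K) :
    ∃ C : ℝ, 0 < C ∧ ∀ s : ℕ, 2 ≤ s →
      (Real.log s / Real.log 2) ^ ((s : ℝ) ^ θ) ≤ C * K ^ s := by
  obtain ⟨N, hN⟩ := Filter.eventually_atTop.mp (aux_eventually θ K hθ hK)
  have hnn : ∀ s : ℕ, 0 ≤ (Real.log s / Real.log 2) ^ ((s : ℝ) ^ θ) := fun s =>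
    Real.rpow_nonneg (div_nonneg (Real.log_natCast_nonneg s) (Real.log_nonneg (by norm_num))) _
  have hsum : 0 ≤ ∑ s ∈ Finset.range N, (Real.log s / Real.log 2) ^ ((s : ℝ) ^ θ) :=
    Finset.sum_nonneg fun s _ => hnn s
  refine ⟨1 + ∑ s ∈ Finset.range N, (Real.log s / Real.log 2) ^ ((s : ℝ) ^ θ), by linarith, ?_⟩
  intro s _
  have hKs : 1 ≤ K ^ s := one_le_pow₀ hK.le
  rcases le_or_gt N s with h | h
  · have := hN s h
    nlinarith
  · have := Finset.single_le_sum (f := fun s : ℕ => (Real.log s / Real.log 2) ^ ((s : ℝ) ^ θ))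
      (fun i _ => hnn i) (Finset.mem_range.mpr h)
    nlinarith

theorem aux_prod (K : ℝ) (hK : 1 < K) :
    ∃ C : ℝ, 0 < C ∧ ∀ S : Finset ℕ, (∀ p ∈ S, 2 ≤ p) → 2 ≤ S.card →
      ∏ p ∈ S, (Real.log S.card / Real.log p) ≤ C * (K * K) ^ S.card := by
  have hK0 : 0 < K := by linarith
  obtain ⟨C, hC, h⟩ := aux_bound K⁻¹ K (inv_lt_one_of_one_lt₀ hK) hK
  refine ⟨C, hC, fun S hS hs => ?_⟩
  have hb := h S.card hs
  set s := S.card with hsdef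
  have hs2' : (2 : ℝ) ≤ s := by exact_mod_cast hs
  have hs0 : (0 : ℝ) < s := by linarith
  have hls : 0 < Real.log s := Real.log_pos (by linarith)
  have hl2 : 0 < Real.log 2 := Real.log_pos (by norm_num)
  have hlp : ∀ p ∈ S, 0 < Real.log p := fun p hp => Real.log_pos (by exact_mod_cast hS p hp)
  have hr1 : 1 ≤ Real.log s / Real.log 2 := by
    rw [one_le_div hl2]; exact Real.log_le_log (by norm_num) hs2'
  rw [← Finset.prod_filter_mul_prod_filter_not S (fun p : ℕ => (p : ℝ) ≤ (s : ℝ) ^ K⁻¹)]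
  have hA : ∏ p ∈ S.filter (fun p : ℕ => (p : ℝ) ≤ (s : ℝ) ^ K⁻¹), (Real.log s / Real.log p) ≤ C * K ^ s := by
    refine le_trans ?_ hb
    calc _ ≤ ∏ p ∈ S.filter (fun p : ℕ => (p : ℝ) ≤ (s : ℝ) ^ K⁻¹), (Real.log s / Real.log 2) := by
          apply Finset.prod_le_prod
          · intro p hp
            have := hlp p (Finset.mem_filter.mp hp).1
            positivity
          · intro p hp
            have := hS p (Finset.mem_filter.mp hp).1
            have : (2 : ℝ) ≤ p := by exact_mod_cast this
            gcongr
      _ = (Real.log s / Real.log 2) ^ (((S.filter fun p : ℕ => (p : ℝ) ≤ (s : ℝ) ^ K⁻¹).card : ℕ) : ℝ) := by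
          rw [Finset.prod_const, Real.rpow_natCast]
      _ ≤ _ := by
          apply Real.rpow_le_rpow_of_exponent_le hr1
          have hsub : (S.filter fun p : ℕ => (p : ℝ) ≤ (s : ℝ) ^ K⁻¹) ⊆
              Finset.Icc 1 ⌊(s : ℝ) ^ K⁻¹⌋₊ := by
            intro p hp
            rw [Finset.mem_filter] at hp
            have := hS p hp.1
            exact Finset.mem_Icc.mpr ⟨by omega, Nat.le_floor hp.2⟩
          have hc := Finset.card_le_card hsub
          rw [Nat.card_Icc, Nat.add_sub_cancel] at hc
          exact (Nat.cast_le.mpr hc).trans (Nat.floor_le (by positivity))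
  have hB : ∏ p ∈ S.filter (fun p : ℕ => ¬ (p : ℝ) ≤ (s : ℝ) ^ K⁻¹), (Real.log s / Real.log p) ≤ K ^ s := by
    calc _ ≤ ∏ p ∈ S.filter (fun p : ℕ => ¬ (p : ℝ) ≤ (s : ℝ) ^ K⁻¹), K := by
          apply Finset.prod_le_prod
          · intro p hp
            have := hlp p (Finset.mem_filter.mp hp).1
            positivity
          · intro p hp
            rw [Finset.mem_filter] at hp
            have h1 := hlp p hp.1
            rw [div_le_iff₀ h1]
            have h2 := Real.log_le_log (by positivity) (not_le.mp hp.2).le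
            rw [Real.log_rpow hs0, inv_mul_le_iff₀ hK0] at h2
            exact h2
      _ ≤ K ^ s := by
          rw [Finset.prod_const]
          exact pow_le_pow_right₀ hK.le (Finset.card_filter_le _ _)
  calc _ ≤ (C * K ^ s) * K ^ s := by
        apply mul_le_mul hA hB _ (by positivity)
        apply Finset.prod_nonneg
        intro p hp
        have := hlp p (Finset.mem_filter.mp hp).1
        positivity
    _ = _ := by rw [mul_pow]; ring

open scoped Classical in
/-- For every `ε̃ > 0` there is a constant `C` (depending on `f`, `Q` and `ε̃`) such that
for every positive integer `n` with `s := ω_Q(n) ≥ 2` one has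
`f(n) ≤ C·((c_f + ε̃)·log n/(s·log s))^s`. -/
theorem f_le_of_many_prime_factors
    (q : ℕ → ℕ) (g f : ℕ → ℕ) (cf : ℝ)
    (hqprime : ∀ j : ℕ, 1 ≤ j → (q j).Prime)
    (hqmono : ∀ j : ℕ, 1 ≤ j → q j < q (j + 1))
    (hg0 : g 0 = 1) (hgmono : Monotone g)
    (hcf : 0 < cf)
    (hgsub : ∀ x : ℕ, 1 ≤ x → (g x : ℝ) ≤ cf * x)
    (hf0 : f 0 = 1) (hf1 : f 1 = 1)
    (hfmult : ∀ m₁ m₂ : ℕ, Nat.Coprime m₁ m₂ → f (m₁ * m₂) = f m₁ * f m₂)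
    (hfQ : ∀ p ν : ℕ, p.Prime → (∃ j, 1 ≤ j ∧ q j = p) → 1 ≤ ν → f (p ^ ν) = g ν)
    (hfnotQ : ∀ p ν : ℕ, p.Prime → ¬(∃ j, 1 ≤ j ∧ q j = p) → 1 ≤ ν →
      f (p ^ ν) = 0 ∨ f (p ^ ν) = 1)
    (εt : ℝ) (hεt : 0 < εt) :
    ∃ C : ℝ, 0 < C ∧ ∀ n s : ℕ, 0 < n →
      s = (n.primeFactors.filter fun p => ∃ j, 1 ≤ j ∧ q j = p).card →
      2 ≤ s →
      (f n : ℝ) ≤ C * ((cf + εt) * Real.log n / (s * Real.log s)) ^ s := by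
  have hL : 1 < (cf + εt) / cf := by rw [one_lt_div hcf]; linarith
  have hL0 : 0 ≤ (cf + εt) / cf := by linarith
  obtain ⟨C, hC, hP⟩ := aux_prod (Real.sqrt ((cf + εt) / cf)) (by
    rw [Real.lt_sqrt (by norm_num)]; simpa using hL)
  rw [Real.mul_self_sqrt hL0] at hP
  refine ⟨C, hC, fun n s hn hs h2 => ?_⟩
  set S := n.primeFactors.filter fun p => ∃ j, 1 ≤ j ∧ q j = p with hSdef
  have hSprime : ∀ p ∈ S, p.Prime := fun p hp =>
    Nat.prime_of_mem_primeFactors (Finset.mem_filter.mp hp).1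
  have hν : ∀ p ∈ n.primeFactors, 1 ≤ n.factorization p := fun p hp =>
    (Nat.prime_of_mem_primeFactors hp).factorization_pos_of_dvd hn.ne'
      (Nat.dvd_of_mem_primeFactors hp)
  have hb := hP S (fun p hp => (hSprime p hp).two_le) (hs ▸ h2)
  rw [← hs] at hb
  have hs2' : (2 : ℝ) ≤ s := by exact_mod_cast h2
  have hs0 : (0 : ℝ) < s := by linarith
  have hls : 0 < Real.log s := Real.log_pos (by linarith)
  have hlp : ∀ p ∈ S, 0 < Real.log p := fun p hp =>
    Real.log_pos (by exact_mod_cast (hSprime p hp).one_lt)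
  have hf : (f n : ℝ) ≤ ∏ p ∈ S, (cf * n.factorization p) := by
    rw [Nat.multiplicative_factorization f hfmult hf1 hn.ne', Finsupp.prod,
      Nat.support_factorization, Nat.cast_prod,
      ← Finset.prod_filter_mul_prod_filter_not n.primeFactors (fun p => ∃ j, 1 ≤ j ∧ q j = p)]
    rw [← mul_one (∏ p ∈ S, (cf * n.factorization p))]
    apply mul_le_mul
    · apply Finset.prod_le_prod (fun _ _ => by positivity)
      intro p hp
      have hp' := Finset.mem_filter.mp hp
      rw [hfQ p _ (hSprime p hp) hp'.2 (hν p hp'.1)]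
      exact hgsub _ (hν p hp'.1)
    · apply Finset.prod_le_one (fun _ _ => by positivity)
      intro p hp
      have hp' := Finset.mem_filter.mp hp
      rcases hfnotQ p _ (Nat.prime_of_mem_primeFactors hp'.1) hp'.2 (hν p hp'.1) with h | h <;>
        rw [h] <;> norm_num
    · exact Finset.prod_nonneg fun _ _ => by positivity
    · exact Finset.prod_nonneg fun _ _ => by positivity
  have hlog : ∑ p ∈ S, (n.factorization p * Real.log p) ≤ Real.log n := by
    rw [Real.log_nat_eq_sum_factorization, Finsupp.sum, Nat.support_factorization]
    exact Finset.sum_le_sum_of_subset_of_nonneg (Finset.filter_subset _ _)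
      fun p _ _ => mul_nonneg (Nat.cast_nonneg _) (Real.log_natCast_nonneg p)
  have ham := aux_amgm S (fun p => n.factorization p * Real.log p)
    (fun p _ => mul_nonneg (Nat.cast_nonneg _) (Real.log_natCast_nonneg p)) (by omega)
  rw [← hs] at ham
  have ham2 : ∏ p ∈ S, (n.factorization p * Real.log p) ≤ (Real.log n / s) ^ s := by
    refine ham.trans ?_
    have : 0 ≤ ∑ p ∈ S, (n.factorization p * Real.log p) :=
      Finset.sum_nonneg fun p _ => mul_nonneg (Nat.cast_nonneg _) (Real.log_natCast_nonneg p)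
    gcongr
  have hln := Real.log_natCast_nonneg n
  have hid : ∏ p ∈ S, (cf * n.factorization p) = (cf / Real.log s) ^ s *
      ((∏ p ∈ S, (n.factorization p * Real.log p)) * ∏ p ∈ S, (Real.log s / Real.log p)) := by
    rw [hs, ← Finset.prod_const, ← Finset.prod_mul_distrib, ← Finset.prod_mul_distrib, ← hs]
    apply Finset.prod_congr rfl
    intro p hp
    have := hlp p hp
    field_simp
  calc (f n : ℝ) ≤ _ := hf
    _ = _ := hid
    _ ≤ (cf / Real.log s) ^ s * ((Real.log n / s) ^ s * (C * ((cf + εt) / cf) ^ s)) := by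
      apply mul_le_mul_of_nonneg_left _ (by positivity)
      apply mul_le_mul ham2 hb _ (by positivity)
      exact Finset.prod_nonneg fun p hp => by have := hlp p hp; positivity
    _ = C * ((cf / Real.log s) * (Real.log n / s) * ((cf + εt) / cf)) ^ s := by
      rw [mul_pow, mul_pow]; ring
    _ = _ := by
      congr 2
      field_simp
end

section
/- Under the standing hypotheses, let ε be the exponent from the hypothesis g(i)/g(i−1) = 1 + O(i^{−1/2−ε}) and set K = max{6, 2/ε}. There are constants C > 0 and n₀ such that the following holds for all n ≥ n₀: if N″ = v₁^{a₁}···v_s^{a_s}, where v₁ < … < v_s all belong to Q, each a_i is a positive integer with a_i ≤ (log₂ n)^K, and s > √(log n)/(log₂ n)^{K/2}, then log m_{N″} ≥ (1 − C·(log₃ n)/(log₂ n))·c_†·κ·((log₂ n)²/4)·∑_{j ≤ s} j·a_j, where m_{N″} is the least positive integer m with f(m) = N″. -/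
open Filter

lemma aux_exchange (Q : ℕ → Prop) (g f gdag : ℕ → ℕ) (cstar : ℝ) (q1 : ℕ)
    (hQ : ∀ p, Q p → p.Prime)
    (hg0 : g 0 = 1) (hq1 : 2 ≤ q1)
    (hgd : ∀ y, 1 < y → (∀ p : ℕ, p.Prime → p ∣ y → Q p) → 0 < gdag y ∧ g (gdag y) = y)
    (hgd2 : ∀ x y, 0 < x → g x = y → gdag y ≤ x)
    (hsuper : ∀ a b : ℕ,
      (∀ p : ℕ, p.Prime → p ∣ a → Q p) →
      (∀ p : ℕ, p.Prime → p ∣ b → Q p) →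
      q1 ≤ a → a ≤ b →
      (gdag b : ℝ) + cstar * b * gdag a ≤ gdag (a * b))
    (hf1 : f 1 = 1)
    (hfmult : ∀ m₁ m₂ : ℕ, Nat.Coprime m₁ m₂ → f (m₁ * m₂) = f m₁ * f m₂)
    (hfQ : ∀ p ν : ℕ, p.Prime → Q p → 1 ≤ ν → f (p ^ ν) = g ν)
    (m : ℕ) (hm : 0 < m) (hmin : ∀ m', 0 < m' → f m' = f m → m ≤ m')
    (p r a b : ℕ) (hp : Q p) (hr : Q r)
    (ha : ∀ p : ℕ, p.Prime → p ∣ a → Q p)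
    (hb : ∀ p : ℕ, p.Prime → p ∣ b → Q p) (hqa : q1 ≤ a) (hab : a ≤ b)
    (hpν : g (m.factorization p) = a * b) (hrν : g (m.factorization r) = 1) :
    cstar * b * Real.log p ≤ Real.log r := by
  have hpp := hQ p hp
  have hrp := hQ r hr
  have hpr : p ≠ r := by
    rintro rfl
    have : 2 * 2 ≤ a * b := Nat.mul_le_mul (by omega) (by omega)
    omega
  have hfQ' : ∀ p ν : ℕ, Q p → f (p ^ ν) = g ν := by
    intro p ν h
    rcases Nat.eq_zero_or_pos ν with rfl | h'
    · simp [hf1, hg0]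
    · exact hfQ p ν (hQ p h) h h'
  set ν := m.factorization p with hν
  set μ := m.factorization r with hμ
  obtain ⟨m1, hm1, hm1c⟩ : ∃ m1, m = p ^ ν * m1 ∧ ¬ p ∣ m1 :=
    ⟨m / p ^ ν, (Nat.ordProj_mul_ordCompl_eq_self m p).symm, Nat.not_dvd_ordCompl hpp hm.ne'⟩
  have hm10 : m1 ≠ 0 := by rintro rfl; simp at hm1c
  have hμ1 : m1.factorization r = μ := by
    rw [hμ, hm1, Nat.factorization_mul (pow_ne_zero _ hpp.ne_zero) hm10]
    simp [hpp.factorization, hpr]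
  obtain ⟨m0, hm0, hm0c⟩ : ∃ m0, m1 = r ^ μ * m0 ∧ ¬ r ∣ m0 := by
    rw [← hμ1]
    exact ⟨m1 / r ^ (m1.factorization r), (Nat.ordProj_mul_ordCompl_eq_self m1 r).symm, Nat.not_dvd_ordCompl hrp hm10⟩
  have hm00 : m0 ≠ 0 := by rintro rfl; simp at hm0c
  have hpm0 : ¬ p ∣ m0 := fun h => hm1c (hm0 ▸ Dvd.dvd.mul_left h _)
  have key : ∀ x y, f (p ^ x * (r ^ y * m0)) = g x * (g y * f m0) := by
    intro x y
    have c2 : Nat.Coprime (r ^ y) m0 := Nat.Coprime.pow_left _ ((Nat.Prime.coprime_iff_not_dvd hrp).2 hm0c)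
    have c1 : Nat.Coprime (p ^ x) (r ^ y * m0) := by
      apply Nat.Coprime.mul_right
      · exact Nat.Coprime.pow _ _ ((Nat.coprime_primes hpp hrp).2 hpr)
      · exact Nat.Coprime.pow_left _ ((Nat.Prime.coprime_iff_not_dvd hpp).2 hpm0)
    rw [hfmult _ _ c1, hfmult _ _ c2, hfQ' p x hp, hfQ' r y hr]
  obtain ⟨ga0, ga⟩ := hgd a (by omega) ha
  obtain ⟨gb0, gb⟩ := hgd b (by omega) hb
  have hle := hmin (p ^ gdag b * (r ^ gdag a * m0))
    (Nat.mul_pos (pow_pos hpp.pos _) (Nat.mul_pos (pow_pos hrp.pos _) (by omega)))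
    (by
      have : f m = f (p ^ ν * (r ^ μ * m0)) := by rw [← hm0, ← hm1]
      rw [this, key, key, ga, gb, hpν, hrν]; ring)
  have hle2 : p ^ ν * m0 ≤ p ^ gdag b * r ^ gdag a * m0 := by
    calc p ^ ν * m0 ≤ p ^ ν * (r ^ μ * m0) := by
          gcongr; exact Nat.le_mul_of_pos_left _ (pow_pos hrp.pos _)
      _ = m := by rw [← hm0, ← hm1]
      _ ≤ _ := by rw [mul_assoc]; exact hle
  have hle3 : p ^ ν ≤ p ^ gdag b * r ^ gdag a := Nat.le_of_mul_le_mul_right hle2 (by omega)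
  have hp0 : (0:ℝ) < p := by exact_mod_cast hpp.pos
  have hr0 : (0:ℝ) < r := by exact_mod_cast hrp.pos
  have hle4 : (ν:ℝ) * Real.log p ≤ gdag b * Real.log p + gdag a * Real.log r := by
    have h : ((p:ℝ) ^ ν) ≤ (p:ℝ) ^ gdag b * (r:ℝ) ^ gdag a := by exact_mod_cast hle3
    have := Real.log_le_log (by positivity) h
    rwa [Real.log_mul (by positivity) (by positivity), Real.log_pow, Real.log_pow, Real.log_pow] at this
  have hν0 : 0 < ν := by
    rcases Nat.eq_zero_or_pos ν with h | h
    · rw [h, hg0] at hpν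
      have : 2 * 2 ≤ a * b := Nat.mul_le_mul (by omega) (by omega)
      omega
    · exact h
  have h5 : (gdag (a * b) : ℝ) ≤ ν := by exact_mod_cast hgd2 ν _ hν0 hpν
  have h6 := hsuper a b ha hb hqa hab
  have hlp : 0 ≤ Real.log p := Real.log_natCast_nonneg p
  have h7 : (gdag b + cstar * b * gdag a) * Real.log p ≤ gdag b * Real.log p + gdag a * Real.log r :=
    (mul_le_mul_of_nonneg_right (h6.trans h5) hlp).trans hle4
  have ga1 : (0:ℝ) < gdag a := by exact_mod_cast ga0
  by_contra hcon
  push Not at hcon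
  nlinarith [mul_lt_mul_of_pos_left hcon ga1]

lemma aux_Omega {ι : Type*} (S : Finset ι) (h : ι → ℕ) (h0 : ∀ i ∈ S, h i ≠ 0) :
    ArithmeticFunction.cardFactors (∏ i ∈ S, h i) = ∑ i ∈ S, ArithmeticFunction.cardFactors (h i) := by
  classical
  induction S using Finset.induction_on with
  | empty => simp
  | insert i S hi ih =>
    rw [Finset.prod_insert hi, Finset.sum_insert hi, ArithmeticFunction.cardFactors_mul, ih]
    · intro j hj; exact h0 j (Finset.mem_insert_of_mem hj)
    · exact h0 i (Finset.mem_insert_self _ _)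
    · exact Finset.prod_ne_zero_iff.2 fun j hj => h0 j (Finset.mem_insert_of_mem hj)

lemma aux_card_s18 {ι : Type*} (S : Finset ι) (h : ι → ℕ) (h0 : ∀ i ∈ S, h i ≠ 0) :
    (S.filter (fun i => h i ≠ 1)).card ≤ ArithmeticFunction.cardFactors (∏ i ∈ S, h i) := by
  rw [aux_Omega S h h0, Finset.card_eq_sum_ones]
  calc ∑ i ∈ S.filter (fun i => h i ≠ 1), 1 
      ≤ ∑ i ∈ S.filter (fun i => h i ≠ 1), ArithmeticFunction.cardFactors (h i) := by
        apply Finset.sum_le_sum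
        intro i hi
        rw [Finset.mem_filter] at hi
        have := h0 i hi.1
        by_contra hc
        have h2 : ArithmeticFunction.cardFactors (h i) = 0 := by omega
        rw [ArithmeticFunction.cardFactors_eq_zero_iff_eq_zero_or_one] at h2
        omega
    _ ≤ _ := Finset.sum_le_sum_of_subset (Finset.filter_subset _ _)

/-- final counting -/
lemma aux_count (s : ℕ) (a : ℕ → ℕ) (S : Finset ℕ) (hS : ∀ p ∈ S, 1 ≤ p) (φ ν : ℕ → ℕ) (v : ℕ → ℕ)
    (I : Finset ℕ) (hI : I ⊆ Finset.Icc 1 s)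
    (hv : Set.InjOn v I)
    (hcard : ∀ j ∈ I, (S.filter (fun p => φ p = v j)).card = a j)
    (G y : ℝ) (hG : 0 ≤ G) (hy : 1 ≤ y)
    (hν : ∀ j ∈ I, ∀ p ∈ S, φ p = v j → G * j ≤ ν p) :
    G * Real.log y * (∑ j ∈ I, (j:ℝ) * a j - s * y) ≤ ∑ p ∈ S, (ν p : ℝ) * Real.log p := by
  have hly : 0 ≤ Real.log y := Real.log_nonneg hy
  have hdisj : (I : Set ℕ).PairwiseDisjoint (fun j => S.filter (fun p => φ p = v j)) := by
    intro i hi j hj hij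
    rw [Function.onFun, Finset.disjoint_left]
    intro p hp hp'
    rw [Finset.mem_filter] at hp hp'
    exact hij (hv hi hj (hp.2.symm.trans hp'.2))
  have hdisj2 : (I : Set ℕ).PairwiseDisjoint (fun j => (S.filter (fun p => φ p = v j)).filter (fun p : ℕ => (p:ℝ) ≤ y)) := by
    intro i hi j hj hij
    exact (hdisj hi hj hij).mono (Finset.filter_subset _ _) (Finset.filter_subset _ _)
  have h1 : ∑ j ∈ I, ∑ p ∈ S.filter (fun p => φ p = v j), (ν p : ℝ) * Real.log p ≤
      ∑ p ∈ S, (ν p : ℝ) * Real.log p := by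
    rw [← Finset.sum_biUnion hdisj]
    apply Finset.sum_le_sum_of_subset_of_nonneg
    · intro p hp
      rw [Finset.mem_biUnion] at hp
      obtain ⟨j, -, hp⟩ := hp
      exact (Finset.mem_filter.1 hp).1
    · intro p _ _
      exact mul_nonneg (Nat.cast_nonneg _) (Real.log_natCast_nonneg p)
  have h2 : ∀ j ∈ I, G * Real.log y * ((j:ℝ) * a j - s * ((S.filter (fun p => φ p = v j)).filter (fun p : ℕ => (p:ℝ) ≤ y)).card)
      ≤ ∑ p ∈ S.filter (fun p => φ p = v j), (ν p : ℝ) * Real.log p := by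
    intro j hj
    have hjs : (j:ℝ) ≤ s := by exact_mod_cast (Finset.mem_Icc.1 (hI hj)).2
    rw [← hcard j hj]
    set T := S.filter (fun p => φ p = v j) with hT
    have hc := Finset.card_filter_add_card_filter_not (s := T) (fun p : ℕ => (p:ℝ) ≤ y)
    have hc' : (T.card : ℝ) = (T.filter (fun p : ℕ => (p:ℝ) ≤ y)).card + (T.filter (fun p : ℕ => ¬ (p:ℝ) ≤ y)).card := by
      exact_mod_cast hc.symm
    have h3 : ∑ p ∈ T.filter (fun p : ℕ => ¬ (p:ℝ) ≤ y), (G * j * Real.log y) ≤ ∑ p ∈ T, (ν p : ℝ) * Real.log p := by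
      calc _ ≤ ∑ p ∈ T.filter (fun p : ℕ => ¬ (p:ℝ) ≤ y), (ν p : ℝ) * Real.log p := by
            apply Finset.sum_le_sum
            intro p hp
            rw [Finset.mem_filter, hT, Finset.mem_filter] at hp
            apply mul_le_mul (hν j hj p hp.1.1 hp.1.2) _ hly (Nat.cast_nonneg _)
            exact Real.log_le_log (by linarith) (not_le.1 hp.2).le
        _ ≤ _ := by
            apply Finset.sum_le_sum_of_subset_of_nonneg (Finset.filter_subset _ _)
            intro p _ _
            exact mul_nonneg (Nat.cast_nonneg _) (Real.log_natCast_nonneg p)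
    refine le_trans ?_ h3
    rw [Finset.sum_const, nsmul_eq_mul, hc']
    have hb : (0:ℝ) ≤ (T.filter (fun p : ℕ => (p:ℝ) ≤ y)).card := Nat.cast_nonneg _
    have : 0 ≤ G * Real.log y := mul_nonneg hG hly
    have h4 : 0 ≤ (G * Real.log y) * ((s - j) * (T.filter (fun p : ℕ => (p:ℝ) ≤ y)).card) :=
      mul_nonneg this (mul_nonneg (by linarith) hb)
    nlinarith
  have h3 : (∑ j ∈ I, ((((S.filter (fun p => φ p = v j)).filter (fun p : ℕ => (p:ℝ) ≤ y)).card : ℕ) : ℝ)) ≤ y := by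
    rw [← Nat.cast_sum, ← Finset.card_biUnion hdisj2]
    have : (I.biUnion fun j => (S.filter (fun p => φ p = v j)).filter (fun p : ℕ => (p:ℝ) ≤ y)) ⊆ Finset.Icc 1 ⌊y⌋₊ := by
      intro p hp
      simp only [Finset.mem_biUnion, Finset.mem_filter] at hp
      obtain ⟨j, -, ⟨hp, -⟩, hpy⟩ := hp
      exact Finset.mem_Icc.2 ⟨hS p hp, Nat.le_floor hpy⟩
    have := Finset.card_le_card this
    rw [Nat.card_Icc] at this
    calc _ ≤ ((⌊y⌋₊ : ℕ) : ℝ) := by exact_mod_cast (by omega)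
      _ ≤ y := Nat.floor_le (by linarith)
  calc G * Real.log y * (∑ j ∈ I, (j:ℝ) * a j - s * y) 
      ≤ G * Real.log y * (∑ j ∈ I, (j:ℝ) * a j - s * (∑ j ∈ I, ((((S.filter (fun p => φ p = v j)).filter (fun p : ℕ => (p:ℝ) ≤ y)).card : ℕ) : ℝ))) := by
        apply mul_le_mul_of_nonneg_left _ (mul_nonneg hG hly)
        have := mul_le_mul_of_nonneg_left h3 (Nat.cast_nonneg (α := ℝ) s)
        linarith
    _ = ∑ j ∈ I, G * Real.log y * ((j:ℝ) * a j - s * ((S.filter (fun p => φ p = v j)).filter (fun p : ℕ => (p:ℝ) ≤ y)).card) := by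
        rw [← Finset.mul_sum, Finset.sum_sub_distrib, Finset.mul_sum]
    _ ≤ _ := (Finset.sum_le_sum h2).trans h1

lemma aux_comb (q g f gdag : ℕ → ℕ) (cstar : ℝ) (hcs : 0 < cstar)
    (hqprime : ∀ j : ℕ, 1 ≤ j → (q j).Prime)
    (hqmono : ∀ j k : ℕ, 1 ≤ j → j < k → q j < q k)
    (hg0 : g 0 = 1)
    (hgrange : ∀ m : ℕ, 0 < m → (∀ p : ℕ, p.Prime → p ∣ m → ∃ j, 1 ≤ j ∧ q j = p) →
      ∃ x : ℕ, g x = m)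
    (hgd : ∀ y, 1 < y → (∀ p : ℕ, p.Prime → p ∣ y → ∃ j, 1 ≤ j ∧ q j = p) →
      0 < gdag y ∧ g (gdag y) = y)
    (hgd2 : ∀ x y, 0 < x → g x = y → gdag y ≤ x)
    (hsuper : ∀ a b : ℕ,
      (∀ p : ℕ, p.Prime → p ∣ a → ∃ j, 1 ≤ j ∧ q j = p) →
      (∀ p : ℕ, p.Prime → p ∣ b → ∃ j, 1 ≤ j ∧ q j = p) →
      q 1 ≤ a → a ≤ b →
      (gdag b : ℝ) + cstar * b * gdag a ≤ gdag (a * b))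
    (hf1 : f 1 = 1)
    (hfmult : ∀ m₁ m₂ : ℕ, Nat.Coprime m₁ m₂ → f (m₁ * m₂) = f m₁ * f m₂)
    (hfQ : ∀ p ν : ℕ, p.Prime → (∃ j, 1 ≤ j ∧ q j = p) → 1 ≤ ν → f (p ^ ν) = g ν)
    (hfnotQ : ∀ p ν : ℕ, p.Prime → ¬(∃ j, 1 ≤ j ∧ q j = p) → 1 ≤ ν →
      f (p ^ ν) = 0 ∨ f (p ^ ν) = 1)
    (D : ℝ) (hD : 0 < D) (hqD : ∀ t : ℕ, 1 ≤ t → (q t : ℝ) ≤ D * (t:ℝ) ^ 2)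
    (s : ℕ) (v a : ℕ → ℕ)
    (hvQ : ∀ i ∈ Finset.Icc 1 s, ∃ j, 1 ≤ j ∧ q j = v i)
    (hvinj : Set.InjOn v (Finset.Icc 1 s))
    (T J0 G y : ℝ) (hT : ((∑ i ∈ Finset.Icc 1 s, a i : ℕ) : ℝ) + 1 ≤ T)
    (hJ : Real.log D + 2 * Real.log T < cstar * Real.log 2 * J0)
    (hvJ : ∀ j ∈ (Finset.Icc 1 s).filter (fun j : ℕ => J0 ≤ (j:ℝ)), J0 ≤ v j)
    (hG : 0 ≤ G) (hy : 1 ≤ y)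
    (hGv : ∀ j ∈ (Finset.Icc 1 s).filter (fun j : ℕ => J0 ≤ (j:ℝ)), G * j ≤ gdag (v j))
    (m : ℕ) (hmdef : m = sInf {m : ℕ | 0 < m ∧ f m = ∏ i ∈ Finset.Icc 1 s, v i ^ a i}) :
    G * Real.log y * (∑ j ∈ (Finset.Icc 1 s).filter (fun j : ℕ => J0 ≤ (j:ℝ)), (j:ℝ) * a j - s * y)
      ≤ Real.log m := by
  set N := ∏ i ∈ Finset.Icc 1 s, v i ^ a i with hN
  have hvp : ∀ i ∈ Finset.Icc 1 s, (v i).Prime := by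
    intro i hi
    obtain ⟨j, hj, h⟩ := hvQ i hi
    exact h ▸ hqprime j hj
  have hN0 : N ≠ 0 := Finset.prod_ne_zero_iff.2 fun i hi => pow_ne_zero _ (hvp i hi).ne_zero
  have hNQ : ∀ p : ℕ, p.Prime → p ∣ N → ∃ j, 1 ≤ j ∧ q j = p := by
    intro p hp hpN
    obtain ⟨i, hi, h⟩ := (Prime.dvd_finsetProd_iff hp.prime _).1 hpN
    have h2 := hp.dvd_of_dvd_pow h
    have h3 := (Nat.prime_dvd_prime_iff_eq hp (hvp i hi)).1 h2
    exact h3 ▸ hvQ i hi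
  have hne : {m : ℕ | 0 < m ∧ f m = N}.Nonempty := by
    obtain ⟨x, hx⟩ := hgrange N (Nat.pos_of_ne_zero hN0) hNQ
    rcases Nat.eq_zero_or_pos x with rfl | h
    · exact ⟨1, one_pos, by rw [hf1, ← hx, hg0]⟩
    · exact ⟨q 1 ^ x, pow_pos (hqprime 1 le_rfl).pos _,
        by rw [hfQ _ _ (hqprime 1 le_rfl) ⟨1, le_rfl, rfl⟩ h, hx]⟩
  have hmem := Nat.sInf_mem hne
  rw [← hmdef] at hmem
  obtain ⟨hm0, hfm⟩ := hmem
  have hmin : ∀ m', 0 < m' → f m' = f m → m ≤ m' := by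
    intro m' h1 h2
    rw [hmdef]
    exact Nat.sInf_le ⟨h1, h2.trans hfm⟩
  set S := m.primeFactors with hS
  set φ : ℕ → ℕ := fun p => f (p ^ m.factorization p) with hφ
  have hprod : ∏ p ∈ S, φ p = N := by
    rw [← hfm, Nat.multiplicative_factorization f hfmult hf1 hm0.ne']
    rfl
  have hφ0 : ∀ p ∈ S, φ p ≠ 0 := by
    rw [← hprod] at hN0
    exact Finset.prod_ne_zero_iff.1 hN0
  have hSp : ∀ p ∈ S, p.Prime := fun p hp => Nat.prime_of_mem_primeFactors hp
  have hSν : ∀ p ∈ S, 1 ≤ m.factorization p := fun p hp =>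
    (hSp p hp).factorization_pos_of_dvd hm0.ne' (Nat.dvd_of_mem_primeFactors hp)
  have hSQ : ∀ p ∈ S, φ p ≠ 1 → ∃ j, 1 ≤ j ∧ q j = p := by
    intro p hp h1
    by_contra hc
    rcases hfnotQ p _ (hSp p hp) hc (hSν p hp) with h | h
    · exact hφ0 p hp h
    · exact h1 h
  have hφg : ∀ p ∈ S, φ p ≠ 1 → φ p = g (m.factorization p) := fun p hp h1 =>
    hfQ p _ (hSp p hp) (hSQ p hp h1) (hSν p hp)
  have hφN : ∀ p ∈ S, φ p ∣ N := fun p hp => hprod ▸ Finset.dvd_prod_of_mem φ hp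
  -- find r
  obtain ⟨r, hrQ, hrν, hrlog⟩ : ∃ r, (∃ j, 1 ≤ j ∧ q j = r) ∧ g (m.factorization r) = 1 ∧
      Real.log r < cstar * Real.log 2 * J0 := by
    have hcard := aux_card_s18 S φ hφ0
    rw [hprod, hN, aux_Omega _ _ (fun i hi => pow_ne_zero _ (hvp i hi).ne_zero)] at hcard
    rw [Finset.sum_congr rfl (fun i hi =>
      ArithmeticFunction.cardFactors_apply_prime_pow (hvp i hi))] at hcard
    set A := ∑ i ∈ Finset.Icc 1 s, a i with hA
    have hinj : Set.InjOn q (Finset.Icc 1 (A+1)) := by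
      intro i hi j hj hij
      simp only [Finset.coe_Icc, Set.mem_Icc] at hi hj
      rcases lt_trichotomy i j with h | h | h
      · have := hqmono i j hi.1 h; omega
      · exact h
      · have := hqmono j i hj.1 h; omega
    have hc2 : (S.filter (fun p => φ p ≠ 1)).card < ((Finset.Icc 1 (A+1)).image q).card := by
      rw [Finset.card_image_of_injOn hinj, Nat.card_Icc]; omega
    obtain ⟨r, hr, hrn⟩ := Finset.exists_mem_notMem_of_card_lt_card hc2
    rw [Finset.mem_image] at hr
    obtain ⟨t, ht, rfl⟩ := hr
    rw [Finset.mem_Icc] at ht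
    refine ⟨q t, ⟨t, ht.1, rfl⟩, ?_, ?_⟩
    · by_cases hrS : q t ∈ S
      · have h1 : φ (q t) = 1 := by
          by_contra h
          exact hrn (Finset.mem_filter.2 ⟨hrS, h⟩)
        rw [← h1, hφ]
        exact (hfQ _ _ (hSp _ hrS) ⟨t, ht.1, rfl⟩ (hSν _ hrS)).symm
      · have : m.factorization (q t) = 0 := by
          rw [← Finsupp.notMem_support_iff]; exact hrS
        rw [this, hg0]
    · have ht1 : (1:ℝ) ≤ t := by exact_mod_cast ht.1
      have htT : (t:ℝ) ≤ T := le_trans (by exact_mod_cast ht.2) hT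
      have h1 := Real.log_le_log (by exact_mod_cast (hqprime t ht.1).pos) (hqD t ht.1)
      rw [Real.log_mul hD.ne' (by positivity), Real.log_pow] at h1
      have h2 := Real.log_le_log (by linarith) htT
      push_cast at h1
      linarith
  -- large primes occur alone
  have halone : ∀ j ∈ (Finset.Icc 1 s).filter (fun j : ℕ => J0 ≤ (j:ℝ)), ∀ p ∈ S, v j ∣ φ p →
      φ p = v j := by
    intro j hj p hp hdvd
    have hj' := Finset.mem_of_mem_filter j hj
    obtain ⟨w, hw⟩ := hdvd
    have hv2 := (hvp j hj').two_le
    by_contra hne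
    have hw1 : w ≠ 1 := by rintro rfl; exact hne (by simpa using hw)
    have hw0 : w ≠ 0 := by rintro rfl; exact hφ0 p hp (by simpa using hw)
    have hφ1 : φ p ≠ 1 := by
      rw [hw]; intro h; have := Nat.eq_one_of_mul_eq_one_right h; omega
    have hgp := hφg p hp hφ1
    have hpQ := hSQ p hp hφ1
    have hwQ : ∀ p' : ℕ, p'.Prime → p' ∣ w → ∃ j, 1 ≤ j ∧ q j = p' := fun p' h1 h2 =>
      hNQ p' h1 ((h2.trans (Dvd.intro_left _ hw.symm)).trans (hφN p hp))
    have hvQ' : ∀ p' : ℕ, p'.Prime → p' ∣ v j → ∃ j, 1 ≤ j ∧ q j = p' := fun p' h1 h2 =>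
      hNQ p' h1 ((h2.trans (Dvd.intro _ hw.symm)).trans (hφN p hp))
    have hq1le : ∀ w : ℕ, w ≠ 1 → w ≠ 0 → (∀ p' : ℕ, p'.Prime → p' ∣ w → ∃ j, 1 ≤ j ∧ q j = p') → q 1 ≤ w := by
      intro w hw1 hw0 hwQ
      obtain ⟨p', hp', hpw⟩ := Nat.exists_prime_and_dvd hw1
      obtain ⟨k, hk, rfl⟩ := hwQ p' hp' hpw
      have h1 := Nat.le_of_dvd (Nat.pos_of_ne_zero hw0) hpw
      rcases Nat.lt_or_ge 1 k with h | h
      · have := hqmono 1 k le_rfl h; omega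
      · have : k = 1 := by omega
        subst this; exact h1
    have hlp : Real.log 2 ≤ Real.log p := 
      Real.log_le_log (by norm_num) (by exact_mod_cast (hSp p hp).two_le)
    have hex : ∀ a b : ℕ, (∀ p' : ℕ, p'.Prime → p' ∣ a → ∃ j, 1 ≤ j ∧ q j = p') →
      (∀ p' : ℕ, p'.Prime → p' ∣ b → ∃ j, 1 ≤ j ∧ q j = p') → q 1 ≤ a → a ≤ b → φ p = a * b →
      v j ≤ b → False := by
      intro a b ha hb hqa hab hφab hvb
      have h1 := aux_exchange (fun p => ∃ j, 1 ≤ j ∧ q j = p) g f gdag cstar (q 1)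
        (by rintro p ⟨j, hj, rfl⟩; exact hqprime j hj) hg0 (hqprime 1 le_rfl).two_le hgd hgd2 hsuper hf1
        hfmult hfQ m hm0 hmin p r a b hpQ hrQ ha hb hqa hab (hgp ▸ hφab) hrν
      have h2 : J0 ≤ b := (hvJ j hj).trans (by exact_mod_cast hvb)
      have h3 : cstar * Real.log 2 * J0 ≤ cstar * b * Real.log p := by
        have hl2 : 0 < Real.log 2 := Real.log_pos (by norm_num)
        calc cstar * Real.log 2 * J0 ≤ cstar * Real.log 2 * b := by gcongr
          _ = cstar * b * Real.log 2 := by ring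
          _ ≤ _ := by gcongr
      linarith
    rcases le_total (v j) w with h | h
    · exact hex (v j) w hvQ' hwQ (hq1le _ (by omega) (by omega) hvQ') h hw h
    · exact hex w (v j) hwQ hvQ' (hq1le _ hw1 hw0 hwQ) h (by rw [hw, mul_comm]) le_rfl
  have hcount : ∀ j ∈ (Finset.Icc 1 s).filter (fun j : ℕ => J0 ≤ (j:ℝ)),
      (S.filter (fun p => φ p = v j)).card = a j := by
    intro j hj
    have hj' := Finset.mem_of_mem_filter j hj
    have h1 : N.factorization (v j) = a j := by
      rw [hN, Nat.factorization_prod (fun i hi => pow_ne_zero _ (hvp i hi).ne_zero)]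
      rw [Finsupp.finsetSum_apply, Finset.sum_eq_single j]
      · simp [(hvp j hj').factorization]
      · intro i hi hij
        have : v i ≠ v j := fun h => hij (hvinj hi hj' h)
        simp [(hvp i hi).factorization, this]
      · intro h; exact absurd hj' h
    rw [← h1, ← hprod, Nat.factorization_prod hφ0, Finsupp.finsetSum_apply, Finset.card_filter]
    apply Finset.sum_congr rfl
    intro p hp
    split_ifs with h
    · rw [h, (hvp j hj').factorization_self]
    · exact (Nat.factorization_eq_zero_of_not_dvd fun hd => h (halone j hj p hp hd)).symm
  have hfin := aux_count s a S (fun p hp => (hSp p hp).one_le) φ m.factorization v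
    ((Finset.Icc 1 s).filter (fun j : ℕ => J0 ≤ (j:ℝ))) (Finset.filter_subset _ _)
    (hvinj.mono (by exact_mod_cast Finset.filter_subset _ _)) hcount G y hG hy (by
      intro j hj p hp hpj
      have hj' := Finset.mem_of_mem_filter j hj
      refine (hGv j hj).trans ?_
      have h1 : φ p ≠ 1 := by rw [hpj]; exact (hvp j hj').ne_one
      exact_mod_cast hgd2 _ _ (hSν p hp) ((hφg p hp h1).symm.trans hpj))
  refine hfin.trans (le_of_eq ?_)
  have h2 : (m:ℝ) = ∏ p ∈ S, (p:ℝ) ^ m.factorization p := by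
    conv_lhs => rw [← Nat.prod_factorization_pow_eq_self hm0.ne']
    rw [Finsupp.prod]; push_cast; rfl
  rw [h2, Real.log_prod (fun p hp => pow_ne_zero _ (by exact_mod_cast (hSp p hp).ne_zero))]
  exact Finset.sum_congr rfl fun p hp => (Real.log_pow _ _).symm

lemma aux_large (c D K : ℝ) (hc : 0 < c) (hK : 6 ≤ K) :
    ∀ᶠ L : ℝ in atTop, ∀ s : ℝ, Real.exp (L / 2) / L ^ (K / 2) < s →
      1 ≤ s / L ∧ 3 ≤ s / L ^ K ∧ Real.log D + 2 * Real.log (s * L ^ K + 1) < c * (s / L ^ K) := by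
  have h1 : ∀ᶠ L : ℝ in atTop, L ^ K ≤ Real.exp (1/8 * L) := by
    have := (isLittleO_rpow_exp_pos_mul_atTop K (b := 1/8) (by norm_num)).bound (c := 1) one_pos
    filter_upwards [this, eventually_ge_atTop 1] with L hL hL1
    rw [one_mul, Real.norm_of_nonneg (by positivity), Real.norm_of_nonneg (by positivity)] at hL
    exact hL
  have h2 : ∀ᶠ s : ℝ in atTop, Real.log D + 2 * Real.log (s ^ 2 + 1) < c * Real.sqrt s ∧ 9 ≤ s := by
    have hl := (isLittleO_log_rpow_atTop (r := 1/2) (by norm_num)).bound (c := c/16) (by positivity)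
    have ht : Tendsto (fun s : ℝ => c * Real.sqrt s) atTop atTop :=
      (Real.tendsto_sqrt_atTop).const_mul_atTop hc
    filter_upwards [hl, eventually_ge_atTop 9, ht.eventually_gt_atTop (2 * Real.log D + 4 * Real.log 2)] with s hs hs9 hs3
    refine ⟨?_, hs9⟩
    have hs0 : 0 ≤ Real.log s := Real.log_nonneg (by linarith)
    rw [Real.norm_of_nonneg hs0, Real.norm_of_nonneg (by positivity), ← Real.sqrt_eq_rpow] at hs
    have : Real.log (s^2+1) ≤ Real.log 2 + 2 * Real.log s := by
      calc _ ≤ Real.log (2 * s ^ 2) := Real.log_le_log (by positivity) (by nlinarith)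
        _ = _ := by rw [Real.log_mul (by norm_num) (by positivity), Real.log_pow]; norm_num
    have hsq := Real.sqrt_nonneg s
    nlinarith
  have h3 : Tendsto (fun L : ℝ => Real.exp (L / 4)) atTop atTop :=
    Real.tendsto_exp_atTop.comp (tendsto_id.atTop_div_const (by norm_num))
  obtain ⟨S0, hS0⟩ := eventually_atTop.1 h2
  filter_upwards [h1, h3.eventually_ge_atTop S0, eventually_ge_atTop 1] with L hL1 hL2 hL3 s hs
  have hLK : 1 ≤ L ^ K := Real.one_le_rpow hL3 (by linarith)
  have hs1 : Real.exp (L / 4) ≤ s := by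
    refine le_trans ?_ hs.le
    rw [le_div_iff₀ (by positivity)]
    calc Real.exp (L/4) * L ^ (K/2) ≤ Real.exp (L/4) * L ^ K := by
          gcongr
          linarith
      _ ≤ Real.exp (L/4) * Real.exp (1/8 * L) := by gcongr
      _ = Real.exp (L/4 + 1/8*L) := by rw [Real.exp_add]
      _ ≤ _ := Real.exp_le_exp.2 (by linarith)
  obtain ⟨h4, h5⟩ := hS0 s (hL2.trans hs1)
  have hsq : L ^ K ≤ Real.sqrt s := by
    apply hL1.trans
    apply Real.le_sqrt_of_sq_le
    rw [← Real.exp_nat_mul]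
    convert hs1 using 2
    push_cast; ring
  have hss : Real.sqrt s * Real.sqrt s = s := Real.mul_self_sqrt (by linarith)
  have hs3 : 3 ≤ Real.sqrt s := Real.le_sqrt_of_sq_le (by linarith)
  have hle : Real.sqrt s ≤ s / L ^ K := by
    rw [le_div_iff₀ (by positivity)]
    calc _ ≤ Real.sqrt s * Real.sqrt s := by gcongr
      _ = s := hss
  refine ⟨?_, hs3.trans hle, ?_⟩
  · rw [le_div_iff₀ (by positivity), one_mul]
    have : L ≤ L ^ K := Real.self_le_rpow_of_one_le hL3 (by linarith)
    nlinarith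
  · have : Real.log (s * L ^ K + 1) ≤ Real.log (s ^ 2 + 1) := by
      apply Real.log_le_log (by positivity)
      have hXs : L ^ K ≤ s := by nlinarith
      have hs0 : 0 ≤ s := by linarith
      have := mul_le_mul_of_nonneg_left hXs hs0
      nlinarith
    have := mul_le_mul_of_nonneg_left hle hc.le
    linarith

lemma aux_final (P L ℓ K C1 Sg SI s lJ ly : ℝ) (hP : 0 < P) (hL : 4 ≤ L) (hℓ : 1 ≤ ℓ) (hK : 6 ≤ K)
    (hC1 : 0 ≤ C1) (hu : 3 * K * ℓ + 2 * C1 ≤ L) (hSg : s ^ 2 / 2 ≤ Sg)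
    (hSI : Sg - s ^ 2 / L ≤ SI) (hlJ : L / 2 - 3 * K / 2 * ℓ ≤ lJ) (hly : L / 2 - 3 * K / 2 * ℓ ≤ ly) :
    (1 - (6 * K + 4 * C1 + 4) * (ℓ / L)) * P * (L ^ 2 / 4) * Sg ≤
      P * (lJ - C1) * ly * (SI - s * (s / L)) := by
  have hL0 : 0 < L := by linarith
  obtain ⟨u, hudef⟩ : ∃ u, u = (3 * K * ℓ + 2 * C1) / L := ⟨_, rfl⟩
  obtain ⟨w, hwdef⟩ : ∃ w, w = 4 / L := ⟨_, rfl⟩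
  have hu1 : u ≤ 1 := by rw [hudef]; exact (div_le_one hL0).2 hu
  have hw1 : w ≤ 1 := by rw [hwdef]; exact (div_le_one hL0).2 hL
  have hu0 : 0 ≤ u := by rw [hudef]; positivity
  have hw0 : 0 ≤ w := by rw [hwdef]; positivity
  have huL : u * L = 3 * K * ℓ + 2 * C1 := by rw [hudef]; field_simp
  have hSg0 : 0 ≤ Sg := le_trans (by positivity) hSg
  have a1 : L / 2 * (1 - u) ≤ lJ - C1 := by nlinarith
  have a2 : L / 2 * (1 - u) ≤ ly := by nlinarith
  have a3 : (1 - w) * Sg ≤ SI - s * (s / L) := by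
    have e1 : s ^ 2 / L = w / 4 * s ^ 2 := by rw [hwdef]; field_simp
    have e2 : s * (s / L) = w / 4 * s ^ 2 := by rw [← e1]; ring
    rw [e1] at hSI
    rw [e2]
    nlinarith
  have b0 : 0 ≤ L / 2 * (1 - u) := mul_nonneg (by linarith) (by linarith)
  have b1 : P * (L / 2 * (1 - u)) * (L / 2 * (1 - u)) ≤ P * (lJ - C1) * ly := by
    have : 0 ≤ lJ - C1 := b0.trans a1
    gcongr
  have b2 : 0 ≤ (1 - w) * Sg := mul_nonneg (by linarith) hSg0
  have b3 : P * (L / 2 * (1 - u)) * (L / 2 * (1 - u)) * ((1 - w) * Sg) ≤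
      P * (lJ - C1) * ly * (SI - s * (s / L)) := 
    mul_le_mul b1 a3 b2 (le_trans (by positivity) b1)
  refine le_trans ?_ b3
  have c1 : 1 - (6 * K + 4 * C1 + 4) * (ℓ / L) ≤ (1 - u) ^ 2 * (1 - w) := by
    have d1 : 2 * u + w ≤ (6 * K + 4 * C1 + 4) * (ℓ / L) := by
      rw [hudef, hwdef, ← mul_div_assoc, ← mul_div_assoc, ← add_div]
      gcongr
      nlinarith
    have d2 : 1 - 2 * u - w ≤ (1 - u) ^ 2 * (1 - w) := by
      nlinarith [mul_nonneg hu0 hw0, mul_nonneg (mul_nonneg hu0 hu0) (sub_nonneg.2 hw1)]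
    linarith
  have c2 : 0 ≤ P * (L ^ 2 / 4) * Sg := by positivity
  nlinarith [mul_le_mul_of_nonneg_right c1 c2]

lemma aux_small (s : ℕ) (a : ℕ → ℕ) (J0 X L : ℝ) (hL : 0 < L) (hX : L ≤ X) (hJ : J0 = s / X)
    (ha : ∀ i ∈ Finset.Icc 1 s, (a i : ℝ) ≤ X) :
    ∑ j ∈ Finset.Icc 1 s, (j:ℝ) * a j - (s:ℝ) ^ 2 / L ≤
      ∑ j ∈ (Finset.Icc 1 s).filter (fun j : ℕ => J0 ≤ (j:ℝ)), (j:ℝ) * a j := by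
  have hX0 : 0 < X := by linarith
  have hJ0 : 0 ≤ J0 := by rw [hJ]; positivity
  rw [← Finset.sum_filter_add_sum_filter_not (Finset.Icc 1 s) (fun j : ℕ => J0 ≤ (j:ℝ))]
  have h1 : ∑ j ∈ (Finset.Icc 1 s).filter (fun j : ℕ => ¬ J0 ≤ (j:ℝ)), (j:ℝ) * a j ≤ (s:ℝ) ^ 2 / L := by
    calc _ ≤ ∑ j ∈ (Finset.Icc 1 s).filter (fun j : ℕ => ¬ J0 ≤ (j:ℝ)), J0 * X := by
          apply Finset.sum_le_sum
          intro j hj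
          rw [Finset.mem_filter] at hj
          exact mul_le_mul (not_le.1 hj.2).le (ha j hj.1) (Nat.cast_nonneg _) hJ0
      _ ≤ J0 * (J0 * X) := by
          rw [Finset.sum_const, nsmul_eq_mul]
          apply mul_le_mul_of_nonneg_right _ (by positivity)
          have : (Finset.Icc 1 s).filter (fun j : ℕ => ¬ J0 ≤ (j:ℝ)) ⊆ Finset.Icc 1 ⌊J0⌋₊ := by
            intro j hj
            rw [Finset.mem_filter, Finset.mem_Icc] at hj
            exact Finset.mem_Icc.2 ⟨hj.1.1, Nat.le_floor (not_le.1 hj.2).le⟩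
          have := Finset.card_le_card this
          rw [Nat.card_Icc] at this
          exact le_trans (by exact_mod_cast (by omega)) (Nat.floor_le hJ0)
      _ = s ^ 2 / X := by rw [hJ]; field_simp
      _ ≤ _ := by gcongr
  linarith

lemma aux_Sg (s : ℕ) (a : ℕ → ℕ) (ha : ∀ i ∈ Finset.Icc 1 s, 1 ≤ a i) :
    (s:ℝ) ^ 2 / 2 ≤ ∑ j ∈ Finset.Icc 1 s, (j:ℝ) * a j := by
  have h : ∀ s : ℕ, (s:ℝ)^2/2 ≤ ∑ j ∈ Finset.Icc 1 s, (j:ℝ) := by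
    intro s
    induction s with
    | zero => simp
    | succ k ih => 
      rw [Finset.sum_Icc_succ_top (by omega)]
      push_cast; nlinarith
  refine (h s).trans (Finset.sum_le_sum fun j hj => ?_)
  have : (1:ℝ) ≤ a j := by exact_mod_cast ha j hj
  nlinarith [Nat.cast_nonneg (α := ℝ) j]

lemma aux_gdag (q gdag : ℕ → ℕ) (κ cdag A B : ℝ) (hκ : 0 < κ) (hcdag : 0 < cdag)
    (hqj : ∀ j, j ≤ q j)
    (hA : ∀ j : ℕ, 2 ≤ j →
      |(q j : ℝ) - κ * j * (Real.log j + Real.log (Real.log j))| ≤ A * (κ * j))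
    (hB : ∀ j : ℕ, 1 ≤ j →
      |(gdag (q j) : ℝ) - cdag * q j| ≤ B * (q j : ℝ) / Real.log (q j)) (j : ℕ) (hj : 3 ≤ j) :
    cdag * κ * (Real.log j - (|A| + |B| / cdag)) * j ≤ gdag (q j) := by
  have hj0 : (3:ℝ) ≤ j := by exact_mod_cast hj
  have hqj' : (j:ℝ) ≤ q j := by exact_mod_cast hqj j
  have hlj : 1 ≤ Real.log j := by
    rw [Real.le_log_iff_exp_le (by linarith)]
    linarith [Real.exp_one_lt_d9]
  have hllj : 0 ≤ Real.log (Real.log j) := Real.log_nonneg hlj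
  have hlq : Real.log j ≤ Real.log (q j) := Real.log_le_log (by linarith) hqj'
  by_cases hC : Real.log j ≤ |A| + |B| / cdag
  · refine le_trans ?_ (Nat.cast_nonneg _)
    apply mul_nonpos_of_nonpos_of_nonneg _ (by linarith)
    exact mul_nonpos_of_nonneg_of_nonpos (by positivity) (by linarith)
  push Not at hC
  have h1 := (abs_le.1 (hA j (by omega))).1
  have h2 := (abs_le.1 (hB j (by omega))).1
  have hAA := le_abs_self A
  have hBB := le_abs_self B
  have hq1 : κ * j * (Real.log j - |A|) ≤ q j := by
    have e1 : A * (κ * j) ≤ |A| * (κ * j) := by gcongr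
    have e2 : 0 ≤ κ * j * Real.log (Real.log j) := by positivity
    nlinarith
  have hq2 : B * (q j:ℝ) / Real.log (q j) ≤ |B| / Real.log j * q j := by
    calc _ ≤ |B| * (q j : ℝ) / Real.log j := by gcongr
      _ = _ := by ring
  have hg : (cdag - |B| / Real.log j) * q j ≤ gdag (q j) := by nlinarith
  have hpos : 0 ≤ cdag - |B| / Real.log j := by
    rw [sub_nonneg, div_le_iff₀ (by linarith)]
    have : |B| / cdag ≤ Real.log j := by linarith [abs_nonneg A]
    rw [div_le_iff₀ hcdag] at this
    linarith
  refine le_trans ?_ ((mul_le_mul_of_nonneg_left hq1 hpos).trans hg)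
  have e3 : (cdag - |B| / Real.log j) * (κ * j * (Real.log j - |A|)) =
    cdag * κ * (Real.log j - (|A| + |B| / cdag)) * j + κ * j * (|A| * (|B| / Real.log j)) := by
    field_simp
    ring
  rw [e3]
  have : 0 ≤ κ * j * (|A| * (|B| / Real.log j)) := by positivity
  linarith

/-- Under the standing hypotheses, with `ε` from (A.5) and `K = max{6, 2/ε}`: there are
constants `C > 0` and `n₀` such that for all `n ≥ n₀` and all `N″ = v₁^{a₁}···v_s^{a_s}`
with `v₁ < … < v_s` in `Q`, `1 ≤ a_i ≤ (log₂ n)^K` and `s > √(log n)/(log₂ n)^{K/2}`,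
one has `log m_{N″} ≥ (1 − C·log₃ n/log₂ n)·c_†·κ·((log₂ n)²/4)·∑_{j ≤ s} j·a_j`,
where `m_{N″}` is the least positive integer `m` with `f(m) = N″`. -/
theorem log_minimal_preimage_lower_bound
    (q : ℕ → ℕ) (g f gdag : ℕ → ℕ) (κ cstar cf cdag ε : ℝ)
    -- the strictly increasing sequence of primes `q_1 < q_2 < …` with its asymptotics (A.1)
    (hqprime : ∀ j : ℕ, 1 ≤ j → (q j).Prime)
    (hqmono : ∀ j : ℕ, 1 ≤ j → q j < q (j + 1))
    (hκ : 0 < κ)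
    (hqasymp : ∃ A : ℝ, ∀ j : ℕ, 2 ≤ j →
      |(q j : ℝ) - κ * j * (Real.log j + Real.log (Real.log j))| ≤ A * (κ * j))
    -- `g` is monotonically increasing with `g(0) = 1` (A.2)
    (hg0 : g 0 = 1) (hgmono : Monotone g)
    -- the image of `g` contains the monoid `⟨Q⟩` generated by `Q = {q_j : j ≥ 1}` (A.3)
    (hgrange : ∀ m : ℕ, 0 < m → (∀ p : ℕ, p.Prime → p ∣ m → ∃ j, 1 ≤ j ∧ q j = p) →
      ∃ x : ℕ, g x = m)
    -- `gdag` is the pseudo-inverse `g†`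
    (hgdagdef : ∀ y : ℕ, gdag y = sInf {x : ℕ | 0 < x ∧ g x = y})
    -- the superadditivity assumption (A.4)
    (hcstar : 1 / (q 1 : ℝ) < cstar)
    (hsuper : ∀ a b : ℕ,
      (∀ p : ℕ, p.Prime → p ∣ a → ∃ j, 1 ≤ j ∧ q j = p) →
      (∀ p : ℕ, p.Prime → p ∣ b → ∃ j, 1 ≤ j ∧ q j = p) →
      q 1 ≤ a → a ≤ b →
      (gdag b : ℝ) + cstar * b * gdag a ≤ gdag (a * b))
    -- the growth assumption `g(i)/g(i−1) = 1 + O(i^{−1/2−ε})` (A.5)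
    (hε : 0 < ε)
    (hgratio : ∃ B : ℝ, ∀ i : ℕ, 1 ≤ i →
      |(g i : ℝ) / (g (i - 1) : ℝ) - 1| ≤ B * (i : ℝ) ^ (-(1 / 2 : ℝ) - ε))
    -- the sublinearity assumption `g(x) ≤ c_f·x` (A.6)
    (hcf : 0 < cf)
    (hgsub : ∀ x : ℕ, 1 ≤ x → (g x : ℝ) ≤ cf * x)
    -- the assumption `g†(q) = c_†·q + O(q/log q)` for `q ∈ Q` (A.7)
    (hcdag : 0 < cdag)
    (hgdagasymp : ∃ B : ℝ, ∀ j : ℕ, 1 ≤ j →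
      |(gdag (q j) : ℝ) - cdag * q j| ≤ B * (q j : ℝ) / Real.log (q j))
    -- `f` is multiplicative with `f(p^ν) = g(ν)` for `p ∈ Q`, `f(p^ν) ∈ {0,1}` otherwise
    (hf0 : f 0 = 1) (hf1 : f 1 = 1)
    (hfmult : ∀ m₁ m₂ : ℕ, Nat.Coprime m₁ m₂ → f (m₁ * m₂) = f m₁ * f m₂)
    (hfQ : ∀ p ν : ℕ, p.Prime → (∃ j, 1 ≤ j ∧ q j = p) → 1 ≤ ν → f (p ^ ν) = g ν)
    (hfnotQ : ∀ p ν : ℕ, p.Prime → ¬(∃ j, 1 ≤ j ∧ q j = p) → 1 ≤ ν →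
      f (p ^ ν) = 0 ∨ f (p ^ ν) = 1) :
    ∃ C : ℝ, 0 < C ∧ ∃ n₀ : ℕ, ∀ n : ℕ, n₀ ≤ n → ∀ s : ℕ, ∀ v a : ℕ → ℕ,
      (∀ i : ℕ, 1 ≤ i → i ≤ s → ∃ j, 1 ≤ j ∧ q j = v i) →
      (∀ i : ℕ, 1 ≤ i → i + 1 ≤ s → v i < v (i + 1)) →
      (∀ i : ℕ, 1 ≤ i → i ≤ s →
        1 ≤ a i ∧ (a i : ℝ) ≤ Real.log (Real.log n) ^ (max 6 (2 / ε))) →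
      Real.sqrt (Real.log n) / Real.log (Real.log n) ^ (max 6 (2 / ε) / 2) < (s : ℝ) →
      ∀ mN : ℕ, mN = sInf {m : ℕ | 0 < m ∧ f m = ∏ i ∈ Finset.Icc 1 s, v i ^ a i} →
        (1 - C * (Real.log (Real.log (Real.log n)) / Real.log (Real.log n))) *
            (cdag * κ) * (Real.log (Real.log n) ^ 2 / 4) *
            (∑ j ∈ Finset.Icc 1 s, (j : ℝ) * a j) ≤
          Real.log mN := by
  have hq_lt : ∀ j k : ℕ, 1 ≤ j → j < k → q j < q k := by
    intro j k hj hjk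
    induction k, hjk using Nat.le_induction with
    | base => exact hqmono j hj
    | succ k hk ih => exact ih.trans (hqmono k (by omega))
  have hqj : ∀ j, j ≤ q j := by
    intro j
    induction j with
    | zero => omega
    | succ k ih =>
      rcases Nat.eq_zero_or_pos k with rfl | h
      · exact (hqprime 1 le_rfl).one_le
      · have := hqmono k h; omega
  have hcs : 0 < cstar := lt_of_le_of_lt (by positivity) hcstar
  have hgd : ∀ y, 1 < y → (∀ p : ℕ, p.Prime → p ∣ y → ∃ j, 1 ≤ j ∧ q j = p) →
      0 < gdag y ∧ g (gdag y) = y := by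
    intro y hy hyQ
    obtain ⟨x, hx⟩ := hgrange y (by omega) hyQ
    have hne : {x : ℕ | 0 < x ∧ g x = y}.Nonempty := by
      refine ⟨x, Nat.pos_of_ne_zero ?_, hx⟩
      rintro rfl
      omega
    rw [hgdagdef]
    exact Nat.sInf_mem hne
  have hgd2 : ∀ x y, 0 < x → g x = y → gdag y ≤ x := by
    intro x y hx hxy
    rw [hgdagdef]
    exact Nat.sInf_le ⟨hx, hxy⟩
  have hgdq : ∀ j, 1 ≤ j → 0 < gdag (q j) ∧ g (gdag (q j)) = q j := by
    intro j hj
    apply hgd _ (hqprime j hj).one_lt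
    intro p hp hpq
    exact ⟨j, hj, ((Nat.prime_dvd_prime_iff_eq hp (hqprime j hj)).1 hpq).symm⟩
  have hgdmono : ∀ j k, 1 ≤ j → j ≤ k → gdag (q j) ≤ gdag (q k) := by
    intro j k hj hjk
    rcases Nat.eq_or_lt_of_le hjk with rfl | h
    · exact le_rfl
    · by_contra hc
      push Not at hc
      have h1 := hgmono hc.le
      rw [(hgdq j hj).2, (hgdq k (by omega)).2] at h1
      have := hq_lt j k hj h
      omega
  obtain ⟨A, hA⟩ := hqasymp
  obtain ⟨B, hB⟩ := hgdagasymp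
  obtain ⟨D, hD, hqD⟩ : ∃ D : ℝ, 0 < D ∧ ∀ t : ℕ, 1 ≤ t → (q t : ℝ) ≤ D * (t:ℝ) ^ 2 := by
    refine ⟨κ * (2 + |A|) + q 1, by positivity, fun t ht => ?_⟩
    rcases Nat.eq_or_lt_of_le ht with rfl | h
    · have : 0 ≤ κ * (2 + |A|) := by positivity
      push_cast; linarith
    · have ht1 : (2:ℝ) ≤ t := by exact_mod_cast h
      have h1 := (abs_le.1 (hA t h)).2
      have hl0 : 0 < Real.log t := Real.log_pos (by linarith)
      have hl1 : Real.log t ≤ t := (Real.log_le_sub_one_of_pos (by linarith)).trans (by linarith)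
      have hl2 : Real.log (Real.log t) ≤ t := 
        (Real.log_le_sub_one_of_pos hl0).trans (by linarith)
      have h2 : A ≤ |A| * t := by nlinarith [le_abs_self A, abs_nonneg A]
      have h3 : κ * t * (Real.log t + Real.log (Real.log t) + A) ≤ κ * t * (t + t + |A| * t) := by
        gcongr
      have h4 : (0:ℝ) ≤ q 1 * (t:ℝ)^2 := by positivity
      nlinarith
  set K := max 6 (2 / ε) with hKdef
  have hK : 6 ≤ K := le_max_left _ _
  set C1 := |A| + |B| / cdag with hC1def
  have hC1 : 0 ≤ C1 := by positivity
  refine ⟨6 * K + 4 * C1 + 4, by positivity, ?_⟩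
  have hlog : Tendsto (fun n : ℕ => Real.log n) atTop atTop :=
    Real.tendsto_log_atTop.comp tendsto_natCast_atTop_atTop
  have hLL : Tendsto (fun n : ℕ => Real.log (Real.log n)) atTop atTop :=
    Real.tendsto_log_atTop.comp hlog
  have hu : ∀ᶠ L : ℝ in atTop, 3 * K * Real.log L + 2 * C1 ≤ L := by
    have hl := (Real.isLittleO_log_id_atTop).bound (c := 1 / (6 * K)) (by positivity)
    filter_upwards [hl, eventually_ge_atTop (4 * C1), eventually_ge_atTop 1] with L h1 h2 h3
    rw [Real.norm_of_nonneg (Real.log_nonneg h3), id, Real.norm_of_nonneg (by linarith)] at h1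
    have : 3 * K * Real.log L ≤ 3 * K * (1 / (6 * K) * L) := by gcongr
    have e : 3 * K * (1 / (6 * K) * L) = L / 2 := by field_simp; norm_num
    linarith
  have hev := hLL.eventually (((aux_large (cstar * Real.log 2) D K
    (mul_pos hcs (Real.log_pos (by norm_num))) hK).and hu).and
    ((eventually_ge_atTop 4).and (Real.tendsto_log_atTop.eventually_ge_atTop 1)))
  obtain ⟨n₀, hn₀⟩ := eventually_atTop.1 (hev.and (hlog.eventually_gt_atTop 0))
  refine ⟨n₀, fun n hn s v a hvQ hvmono ha hs mN hmN => ?_⟩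
  obtain ⟨⟨⟨hlarge, hu⟩, hL4, hℓ⟩, hlogn⟩ := hn₀ n hn
  set L := Real.log (Real.log n) with hLdef
  have hL0 : 0 < L := by linarith
  have hsqrt : Real.sqrt (Real.log n) = Real.exp (L / 2) := by
    rw [hLdef, Real.exp_half, Real.exp_log hlogn]
  rw [hsqrt] at hs
  obtain ⟨hy, hJ3, hJ⟩ := hlarge s hs
  have hX0 : 0 < L ^ K := by positivity
  have hLX : L ≤ L ^ K := Real.self_le_rpow_of_one_le (by linarith) (by linarith)
  have hs0 : (0:ℝ) < s := lt_trans (by positivity) hs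
  have hvk : ∀ i, 1 ≤ i → i ≤ s → ∃ k, i ≤ k ∧ q k = v i := by
    intro i hi
    induction i, hi using Nat.le_induction with
    | base => exact fun h => hvQ 1 le_rfl h
    | succ i hi ih =>
      intro h
      obtain ⟨k, hk, hqk⟩ := ih (by omega)
      obtain ⟨k', hk', hqk'⟩ := hvQ (i+1) (by omega) h
      have h1 := hvmono i hi h
      refine ⟨k', ?_, hqk'⟩
      by_contra hc
      rcases Nat.eq_or_lt_of_le (show k' ≤ k by omega) with rfl | h2
      · omega
      · have := hq_lt k' k hk' h2
        omega
  have hvlt : ∀ i j, 1 ≤ i → i < j → j ≤ s → v i < v j := by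
    intro i j hi hij
    induction j, hij using Nat.le_induction with
    | base => exact fun h => hvmono i hi h
    | succ j hj ih => exact fun h => (ih (by omega)).trans (hvmono j (by omega) h)
  have hvinj : Set.InjOn v (Finset.Icc 1 s) := by
    intro i hi j hj hij
    simp only [Finset.coe_Icc, Set.mem_Icc] at hi hj
    rcases lt_trichotomy i j with h | h | h
    · have := hvlt i j hi.1 h hj.2; omega
    · exact h
    · have := hvlt j i hj.1 h hi.2; omega
  have hlogs : L / 2 - K / 2 * Real.log L ≤ Real.log s := by
    have := Real.log_le_log (by positivity) hs.le
    rwa [Real.log_div (by positivity) (by positivity), Real.log_exp, Real.log_rpow hL0] at this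
  have hlJ : L / 2 - 3 * K / 2 * Real.log L ≤ Real.log (s / L ^ K) := by
    rw [Real.log_div (by positivity) (by positivity), Real.log_rpow hL0]
    linarith
  have hly : L / 2 - 3 * K / 2 * Real.log L ≤ Real.log (s / L) := by
    rw [Real.log_div (by positivity) (by positivity)]
    nlinarith
  refine le_trans (aux_final (cdag * κ) L (Real.log L) K C1 _ _ s _ _ (by positivity) hL4 hℓ hK hC1 hu
    (aux_Sg s a fun i hi => (ha i (Finset.mem_Icc.1 hi).1 (Finset.mem_Icc.1 hi).2).1)
    (aux_small s a (s / L ^ K) (L ^ K) L hL0 hLX rfl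
      fun i hi => (ha i (Finset.mem_Icc.1 hi).1 (Finset.mem_Icc.1 hi).2).2) hlJ hly) ?_
  refine aux_comb q g f gdag cstar hcs hqprime hq_lt hg0 hgrange hgd hgd2 hsuper hf1 hfmult hfQ hfnotQ
    D hD hqD s v a (fun i hi => hvQ i (Finset.mem_Icc.1 hi).1 (Finset.mem_Icc.1 hi).2) hvinj
    (s * L ^ K + 1) (s / L ^ K) (cdag * κ * (Real.log (s / L ^ K) - C1)) (s / L) ?_ hJ ?_ ?_ hy ?_ mN hmN
  · have : ((∑ i ∈ Finset.Icc 1 s, a i : ℕ) : ℝ) ≤ s * L ^ K := by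
      push_cast
      calc _ ≤ ∑ i ∈ Finset.Icc 1 s, L ^ K := Finset.sum_le_sum fun i hi =>
            (ha i (Finset.mem_Icc.1 hi).1 (Finset.mem_Icc.1 hi).2).2
        _ = _ := by simp
    linarith
  · intro j hj
    rw [Finset.mem_filter, Finset.mem_Icc] at hj
    obtain ⟨k, hk, hqk⟩ := hvk j hj.1.1 hj.1.2
    refine hj.2.trans ?_
    have := hqj k
    exact_mod_cast (by omega : j ≤ v j)
  · apply mul_nonneg (by positivity)
    linarith
  · intro j hj
    rw [Finset.mem_filter, Finset.mem_Icc] at hj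
    obtain ⟨k, hk, hqk⟩ := hvk j hj.1.1 hj.1.2
    have hj3 : 3 ≤ j := by exact_mod_cast hJ3.trans hj.2
    have h1 := aux_gdag q gdag κ cdag A B hκ hcdag hqj hA hB j hj3
    have h2 : (gdag (q j) : ℝ) ≤ gdag (v j) := by
      rw [← hqk]; exact_mod_cast hgdmono j k hj.1.1 hk
    refine le_trans ?_ (h1.trans h2)
    have h3 := Real.log_le_log (by positivity) hj.2
    gcongr
end

section
/- Under the standing hypotheses, let ε be the exponent from the hypothesis g(i)/g(i−1) = 1 + O(i^{−1/2−ε}), set K = max{6, 2/ε}, and for a positive integer n with f(f(n)) > 1 let N = Π_Q(f(n)) and write N = N′·N″, where N″ is the largest divisor of N of the form ∏ v^{a_v} over primes v | N with ν_v(N) ≤ (log₂ n)^K, and N′ = N/N″ (so every prime power q^{b} ∥ N′ has b > (log₂ n)^K). Then log f(N′) ≪ √((log n)·log₃ n)/(log₂ n)², where the implied constant depends on Q and f. -/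
open Filter

lemma aux_mult (f : ℕ → ℕ) (hf1 : f 1 = 1)
    (hfmult : ∀ m₁ m₂ : ℕ, Nat.Coprime m₁ m₂ → f (m₁ * m₂) = f m₁ * f m₂)
    (e : ℕ → ℕ) (T : Finset ℕ) (hT : ∀ p ∈ T, p.Prime) :
    f (∏ p ∈ T, p ^ e p) = ∏ p ∈ T, f (p ^ e p) := by
  induction T using Finset.induction_on with
  | empty => simp [hf1]
  | insert a s ha ih =>
    rw [Finset.prod_insert ha, Finset.prod_insert ha, hfmult, ih]
    · intro p hp
      exact hT p (Finset.mem_insert_of_mem hp)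
    · apply Nat.Coprime.prod_right
      intro p hp
      apply Nat.Coprime.pow
      rw [Nat.coprime_primes (hT a (Finset.mem_insert_self _ _))
        (hT p (Finset.mem_insert_of_mem hp))]
      rintro rfl
      exact ha hp

lemma aux_sq (T : Finset ℕ) (hT : ∀ p ∈ T, 1 ≤ p) : T.card ^ 2 ≤ 2 * ∑ p ∈ T, p := by
  induction T using Finset.induction_on_max with
  | empty => simp
  | insert a s hs ih =>
    have ha : a ∉ s := fun h => lt_irrefl _ (hs a h)
    rw [Finset.card_insert_of_notMem ha, Finset.sum_insert ha]
    have h1 := ih (fun p hp => hT p (Finset.mem_insert_of_mem hp))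
    have h2 : (insert a s).card ≤ (Finset.Icc 1 a).card := by
      apply Finset.card_le_card
      intro x hx
      rw [Finset.mem_Icc]
      refine ⟨hT x hx, ?_⟩
      rcases Finset.mem_insert.1 hx with h | h
      · exact h.le
      · exact (hs x h).le
    rw [Finset.card_insert_of_notMem ha, Nat.card_Icc, Nat.add_sub_cancel] at h2
    nlinarith

def auxS (m : ℕ) : ℕ := m.factorization.sum (fun p k => k * p)

lemma auxS_mul {a b : ℕ} (ha : a ≠ 0) (hb : b ≠ 0) : auxS (a * b) = auxS a + auxS b := by
  unfold auxS
  rw [Nat.factorization_mul ha hb, Finsupp.sum_add_index']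
  · simp
  · intros; ring

lemma auxS_le (m : ℕ) : auxS m ≤ m := by
  induction m using Nat.recOnMul with
  | zero => simp [auxS]
  | one => simp [auxS]
  | prime p hp =>
    simp [auxS, hp.factorization]
  | mul a b iha ihb =>
    rcases Nat.eq_zero_or_pos a with rfl | ha
    · simp [auxS]
    rcases Nat.eq_zero_or_pos b with rfl | hb
    · simp [auxS]
    rw [auxS_mul ha.ne' hb.ne']
    rcases Nat.lt_or_ge 1 a with h1 | h1
    · rcases Nat.lt_or_ge 1 b with h2 | h2
      · nlinarith
      · have : b = 1 := by omega
        subst this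
        simpa [auxS] using iha
    · have : a = 1 := by omega
      subst this
      simpa [auxS] using ihb

lemma auxS_prod (T : Finset ℕ) (F : ℕ → ℕ) (h : ∀ p ∈ T, F p ≠ 0) :
    auxS (∏ p ∈ T, F p) = ∑ p ∈ T, auxS (F p) := by
  induction T using Finset.induction_on with
  | empty => simp [auxS]
  | insert a s ha ih =>
    have h' : ∀ p ∈ s, F p ≠ 0 := fun p hp => h p (Finset.mem_insert_of_mem hp)
    rw [Finset.prod_insert ha, Finset.sum_insert ha,
      auxS_mul (h a (Finset.mem_insert_self _ _)) (Finset.prod_ne_zero_iff.2 h'), ih h']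

lemma aux_omega (n : ℕ) (hn : n ≠ 0) : 2 ^ (∑ p ∈ n.primeFactors, n.factorization p) ≤ n := by
  conv_rhs => rw [← Nat.prod_factorization_pow_eq_self hn]
  rw [Finsupp.prod, Nat.support_factorization, ← Finset.prod_pow_eq_pow_sum]
  apply Finset.prod_le_prod'
  intro p hp
  exact Nat.pow_le_pow_left (Nat.prime_of_mem_primeFactors hp).two_le _

set_option maxHeartbeats 2000000

open scoped Classical in
/-- Under the standing hypotheses, with `ε` from (A.5) and `K = max{6, 2/ε}`: for `n` with
`f(f(n)) > 1`, let `N = Π_Q(f(n))` and let `N′` be the product of the prime powers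
`q^b ∥ N` with `b > (log₂ n)^K`. Then `log f(N′) ≪ √((log n)·log₃ n)/(log₂ n)²`,
with an implied constant depending on `Q` and `f`. -/
theorem log_f_of_large_exponent_part_small
    (q : ℕ → ℕ) (g f gdag : ℕ → ℕ) (κ cstar cf cdag ε : ℝ)
    -- the strictly increasing sequence of primes `q_1 < q_2 < …` with its asymptotics (A.1)
    (hqprime : ∀ j : ℕ, 1 ≤ j → (q j).Prime)
    (hqmono : ∀ j : ℕ, 1 ≤ j → q j < q (j + 1))
    (hκ : 0 < κ)
    (hqasymp : ∃ A : ℝ, ∀ j : ℕ, 2 ≤ j →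
      |(q j : ℝ) - κ * j * (Real.log j + Real.log (Real.log j))| ≤ A * (κ * j))
    -- `g` is monotonically increasing with `g(0) = 1` (A.2)
    (hg0 : g 0 = 1) (hgmono : Monotone g)
    -- the image of `g` contains the monoid `⟨Q⟩` generated by `Q = {q_j : j ≥ 1}` (A.3)
    (hgrange : ∀ m : ℕ, 0 < m → (∀ p : ℕ, p.Prime → p ∣ m → ∃ j, 1 ≤ j ∧ q j = p) →
      ∃ x : ℕ, g x = m)
    -- `gdag` is the pseudo-inverse `g†`
    (hgdagdef : ∀ y : ℕ, gdag y = sInf {x : ℕ | 0 < x ∧ g x = y})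
    -- the superadditivity assumption (A.4)
    (hcstar : 1 / (q 1 : ℝ) < cstar)
    (hsuper : ∀ a b : ℕ,
      (∀ p : ℕ, p.Prime → p ∣ a → ∃ j, 1 ≤ j ∧ q j = p) →
      (∀ p : ℕ, p.Prime → p ∣ b → ∃ j, 1 ≤ j ∧ q j = p) →
      q 1 ≤ a → a ≤ b →
      (gdag b : ℝ) + cstar * b * gdag a ≤ gdag (a * b))
    -- the growth assumption `g(i)/g(i−1) = 1 + O(i^{−1/2−ε})` (A.5)
    (hε : 0 < ε)
    (hgratio : ∃ B : ℝ, ∀ i : ℕ, 1 ≤ i →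
      |(g i : ℝ) / (g (i - 1) : ℝ) - 1| ≤ B * (i : ℝ) ^ (-(1 / 2 : ℝ) - ε))
    -- the sublinearity assumption `g(x) ≤ c_f·x` (A.6)
    (hcf : 0 < cf)
    (hgsub : ∀ x : ℕ, 1 ≤ x → (g x : ℝ) ≤ cf * x)
    -- the assumption `g†(q) = c_†·q + O(q/log q)` for `q ∈ Q` (A.7)
    (hcdag : 0 < cdag)
    (hgdagasymp : ∃ B : ℝ, ∀ j : ℕ, 1 ≤ j →
      |(gdag (q j) : ℝ) - cdag * q j| ≤ B * (q j : ℝ) / Real.log (q j))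
    -- `f` is multiplicative with `f(p^ν) = g(ν)` for `p ∈ Q`, `f(p^ν) ∈ {0,1}` otherwise
    (hf0 : f 0 = 1) (hf1 : f 1 = 1)
    (hfmult : ∀ m₁ m₂ : ℕ, Nat.Coprime m₁ m₂ → f (m₁ * m₂) = f m₁ * f m₂)
    (hfQ : ∀ p ν : ℕ, p.Prime → (∃ j, 1 ≤ j ∧ q j = p) → 1 ≤ ν → f (p ^ ν) = g ν)
    (hfnotQ : ∀ p ν : ℕ, p.Prime → ¬(∃ j, 1 ≤ j ∧ q j = p) → 1 ≤ ν →
      f (p ^ ν) = 0 ∨ f (p ^ ν) = 1) :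
    ∃ C : ℝ, 0 < C ∧ ∃ n₀ : ℕ, ∀ n N N' : ℕ, n₀ ≤ n → 1 < f (f n) →
      N = ∏ p ∈ (f n).primeFactors.filter (fun p => ∃ j, 1 ≤ j ∧ q j = p),
            p ^ (f n).factorization p →
      N' = ∏ p ∈ N.primeFactors.filter
              (fun p => Real.log (Real.log n) ^ (max 6 (2 / ε)) < (N.factorization p : ℝ)),
            p ^ N.factorization p →
      Real.log (f N') ≤
        C * Real.sqrt (Real.log n * Real.log (Real.log (Real.log n))) /
          Real.log (Real.log n) ^ 2 := by
  set C1 : ℝ := max 1 cf with hC1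
  have hC11 : 1 ≤ C1 := le_max_left _ _
  have hfpp : ∀ p ν : ℕ, p.Prime → 1 ≤ ν → (f (p ^ ν) : ℝ) ≤ C1 * ν := by
    intro p ν hp hν
    have hν' : (1 : ℝ) ≤ ν := by exact_mod_cast hν
    by_cases h : ∃ j, 1 ≤ j ∧ q j = p
    · rw [hfQ p ν hp h hν]
      exact (hgsub ν hν).trans (mul_le_mul_of_nonneg_right (le_max_right _ _) (by positivity))
    · have : (f (p ^ ν) : ℝ) ≤ 1 := by
        rcases hfnotQ p ν hp h hν with h | h <;> rw [h] <;> norm_num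
      nlinarith
  set D : ℝ := 1 + Real.log (2 * C1 ^ 2) with hD
  have hD0 : 0 ≤ Real.log (2 * C1 ^ 2) := Real.log_nonneg (by nlinarith)
  refine ⟨2 * Real.sqrt C1 * D, by positivity, ⌈Real.exp (Real.exp (Real.exp 1))⌉₊, ?_⟩
  intro n N N' hn hff hN hN'
  have hne : Real.exp (Real.exp (Real.exp 1)) ≤ n := Nat.ceil_le.1 hn
  have hnpos : (0 : ℝ) < n := (Real.exp_pos _).trans_le hne
  have hn0 : n ≠ 0 := by
    rintro rfl
    simp at hnpos
  have hl1 : Real.exp (Real.exp 1) ≤ Real.log n := (Real.le_log_iff_exp_le hnpos).2 hne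
  have hX0 : 0 < Real.log n := (Real.exp_pos _).trans_le hl1
  have hl2 : Real.exp 1 ≤ Real.log (Real.log n) := (Real.le_log_iff_exp_le hX0).2 hl1
  have hL0 : 0 < Real.log (Real.log n) := (Real.exp_pos _).trans_le hl2
  have hl3 : 1 ≤ Real.log (Real.log (Real.log n)) := (Real.le_log_iff_exp_le hL0).2 hl2
  have hL1 : 1 ≤ Real.log (Real.log n) := by
    have := Real.add_one_le_exp (1 : ℝ)
    linarith
  set X := Real.log n with hX
  set L := Real.log X with hL
  have hm0 : f n ≠ 0 := by
    intro h
    rw [h, hf0] at hff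
    exact lt_irrefl _ hff
  have hfn : f n = ∏ p ∈ n.primeFactors, f (p ^ n.factorization p) := by
    rw [← aux_mult f hf1 hfmult n.factorization n.primeFactors
      (fun p hp => Nat.prime_of_mem_primeFactors hp)]
    congr 1
    conv_lhs => rw [← Nat.prod_factorization_pow_eq_self hn0]
    rw [Finsupp.prod, Nat.support_factorization]
  have hS : (auxS (f n) : ℝ) ≤ 2 * C1 * X := by
    rw [hfn, auxS_prod]
    · push_cast
      have h1 : ∀ p ∈ n.primeFactors, (auxS (f (p ^ n.factorization p)) : ℝ)
          ≤ C1 * (n.factorization p : ℝ) := by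
        intro p hp
        have hpp := Nat.prime_of_mem_primeFactors hp
        refine le_trans (by exact_mod_cast auxS_le _) (hfpp p _ hpp ?_)
        exact (hpp.dvd_iff_one_le_factorization hn0).1 (Nat.dvd_of_mem_primeFactors hp)
      refine (Finset.sum_le_sum h1).trans ?_
      rw [← Finset.mul_sum]
      have h2 : (2 : ℝ) ^ (∑ p ∈ n.primeFactors, n.factorization p) ≤ n := by
        exact_mod_cast aux_omega n hn0
      have h3 := Real.log_le_log (by positivity) h2
      rw [Real.log_pow] at h3
      push_cast at h3
      have h4 : (0 : ℝ) ≤ ∑ p ∈ n.primeFactors, (n.factorization p : ℝ) := by positivity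
      have h5 := Real.log_two_gt_d9
      have h6 : ∑ p ∈ n.primeFactors, (n.factorization p : ℝ) ≤ 2 * X := by nlinarith
      nlinarith
    · rw [hfn] at hm0
      exact Finset.prod_ne_zero_iff.1 hm0
  have hNd : N ∣ f n := by
    conv_rhs => rw [← Nat.prod_factorization_pow_eq_self hm0]
    rw [Finsupp.prod, Nat.support_factorization, hN]
    exact Finset.prod_dvd_prod_of_subset _ _ _ (Finset.filter_subset _ _)
  have hN0 : N ≠ 0 := ne_zero_of_dvd_ne_zero hm0 hNd
  have hSN : auxS N ≤ auxS (f n) := by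
    obtain ⟨c, hc⟩ := hNd
    have hc0 : c ≠ 0 := by
      rintro rfl
      simp at hc
      exact hm0 hc
    rw [hc, auxS_mul hN0 hc0]
    omega
  have hSN' : (auxS N : ℝ) ≤ 2 * C1 * X := le_trans (by exact_mod_cast hSN) hS
  set T := N.primeFactors.filter
    (fun p => L ^ (max 6 (2 / ε)) < (N.factorization p : ℝ)) with hT
  have hTsub : T ⊆ N.primeFactors := Finset.filter_subset _ _
  have hTS : ∀ U ⊆ N.primeFactors, ∑ p ∈ U, N.factorization p * p ≤ auxS N := by
    intro U hU
    unfold auxS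
    rw [Finsupp.sum, Nat.support_factorization]
    exact Finset.sum_le_sum_of_subset hU
  have hTp : ∀ p ∈ T, p.Prime := fun p hp => Nat.prime_of_mem_primeFactors (hTsub hp)
  have hb : ∀ p ∈ T, (N.factorization p : ℝ) ≤ 2 * C1 * X := by
    intro p hp
    have h1 := hTS {p} (by simpa using hTsub hp)
    rw [Finset.sum_singleton] at h1
    have h2 : N.factorization p ≤ auxS N :=
      le_trans (Nat.le_mul_of_pos_right _ (hTp p hp).pos) h1
    exact le_trans (by exact_mod_cast h2) hSN'
  set R : ℝ := (T.card : ℝ) with hR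
  have hR0 : 0 ≤ R := by positivity
  -- upper bound through the count
  have hlogM : Real.log (2 * C1 ^ 2 * X) ≤ D * L := by
    rw [Real.log_mul (by positivity) hX0.ne']
    nlinarith
  have hM1 : 1 ≤ 2 * C1 ^ 2 * X := by
    have := Real.add_one_le_exp (Real.exp 1)
    have := Real.exp_pos (1 : ℝ)
    have : 1 ≤ X := by linarith
    nlinarith
  have hfN' : (f N' : ℝ) ≤ (2 * C1 ^ 2 * X) ^ T.card := by
    rw [hN', aux_mult f hf1 hfmult N.factorization T hTp]
    push_cast
    rw [← Finset.prod_const]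
    apply Finset.prod_le_prod
    · intros; positivity
    · intro p hp
      have h1 : 1 ≤ N.factorization p :=
        ((hTp p hp).dvd_iff_one_le_factorization hN0).1 (Nat.dvd_of_mem_primeFactors (hTsub hp))
      have h2 := hfpp p _ (hTp p hp) h1
      have h3 := hb p hp
      nlinarith
  have hlog : Real.log (f N') ≤ R * (D * L) := by
    rcases Nat.eq_zero_or_pos (f N') with h | h
    · rw [h]
      simp
      positivity
    · have h1 := Real.log_le_log (by exact_mod_cast h) hfN'
      rw [Real.log_pow] at h1
      exact h1.trans (mul_le_mul_of_nonneg_left hlogM hR0)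
  have hLK : L ^ 6 ≤ L ^ (max 6 (2 / ε)) := by
    have := Real.rpow_le_rpow_of_exponent_le hL1 (le_max_left (6 : ℝ) (2 / ε))
    have h6 : L ^ (6 : ℝ) = L ^ (6 : ℕ) := by exact_mod_cast Real.rpow_natCast L 6
    rw [h6] at this
    exact this
  have hcount : R ^ 2 * L ^ 6 ≤ 4 * C1 * X := by
    have h1 : (R : ℝ) ^ 2 ≤ 2 * ∑ p ∈ T, (p : ℝ) := by
      rw [hR]
      have h0 := (Nat.cast_le (α := ℝ)).2 (aux_sq T (fun p hp => (hTp p hp).one_lt.le))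
      push_cast at h0
      exact h0
    have h2 : ∑ p ∈ T, L ^ 6 * (p : ℝ) ≤ ∑ p ∈ T, (N.factorization p : ℝ) * p := by
      apply Finset.sum_le_sum
      intro p hp
      exact mul_le_mul_of_nonneg_right (hLK.trans (Finset.mem_filter.1 hp).2.le) (by positivity)
    have h3 : ∑ p ∈ T, (N.factorization p : ℝ) * p ≤ auxS N := by
      exact_mod_cast hTS T hTsub
    rw [← Finset.mul_sum] at h2
    have h4 : 0 < L ^ 6 := by positivity
    nlinarith
  have hRL : R * L ^ 3 ≤ 2 * (Real.sqrt C1 * Real.sqrt X) := by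
    refine abs_le_of_sq_le_sq' ?_ (by positivity) |>.2
    rw [mul_pow, mul_pow, mul_pow, Real.sq_sqrt (by positivity), Real.sq_sqrt hX0.le]
    nlinarith
  have hsq : Real.sqrt X ≤ Real.sqrt (X * Real.log L) := by
    apply Real.sqrt_le_sqrt
    nlinarith
  rw [le_div_iff₀ (by positivity)]
  have hDp : 0 ≤ D := by positivity
  calc Real.log (f N') * L ^ 2 ≤ R * (D * L) * L ^ 2 :=
        mul_le_mul_of_nonneg_right hlog (by positivity)
    _ = D * (R * L ^ 3) := by ring
    _ ≤ D * (2 * (Real.sqrt C1 * Real.sqrt X)) := mul_le_mul_of_nonneg_left hRL hDp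
    _ = 2 * Real.sqrt C1 * D * Real.sqrt X := by ring
    _ ≤ _ := mul_le_mul_of_nonneg_left hsq (by positivity)
end
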